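/- arXiv:0710.5350 — 3 statements merged into one kernel-verified Lean document; each statement's English description precedes it below -/
import Mathlib

section
/- Let λ = (λ1,λ2,λ3,λ4) be an ordered weight vector with λ1 > 1/2, and let μ = (μ1,μ2,μ3,μ4) be any weight vector with μ1 ≥ 1/2. Then ρ_BD(λ) can be transformed to ρ_BD(μ) by SLOCC if and only if μ lies in the convex hull of the nine vectors consisting of: the six vectors (λ1, λ_{π(2)}, λ_{π(3)}, λ_{π(4)}) for π a permutation of {2,3,4}, together with λ_12 = (1/2,1/2,0,0), λ_13 = (1/2,0,1/2,0), and λ_14 = (1/2,0,0,1/2). -/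
open Matrix Complex
open scoped Kronecker ComplexOrder

noncomputable section
namespace Paper

abbrev Q2 := Fin 2 × Fin 2
abbrev M4 := Matrix Q2 Q2 ℂ
abbrev M16 := Matrix (Q2 × Q2) (Q2 × Q2) ℂ

/-- `1/√2` as a complex number. -/
def invSqrt2 : ℂ := ((Real.sqrt 2)⁻¹ : ℝ)

/-- The four Bell states `|Φ₁⟩,…,|Φ₄⟩` as vectors in `ℂ²⊗ℂ²`
(product basis indexed by `Fin 2 × Fin 2`). -/
def bell : Fin 4 → Q2 → ℂ :=
  ![fun p => !![invSqrt2, 0; 0, invSqrt2] p.1 p.2,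
    fun p => !![invSqrt2, 0; 0, -invSqrt2] p.1 p.2,
    fun p => !![0, invSqrt2; invSqrt2, 0] p.1 p.2,
    fun p => !![0, invSqrt2; -invSqrt2, 0] p.1 p.2]

/-- The Bell projectors `Π_i = |Φ_i⟩⟨Φ_i|`. -/
def BellProj (i : Fin 4) : M4 := vecMulVec (bell i) (star (bell i))

/-- The Pauli matrices `σ_x, σ_y, σ_z`. -/
def pauli : Fin 3 → Matrix (Fin 2) (Fin 2) ℂ :=
  ![!![0, 1; 1, 0], !![0, -I; I, 0], !![1, 0; 0, -1]]

/-- Reindexing `((a',b'),(a'',b'')) ↦ ((a',a''),(b',b''))`. -/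
def swapMid : (Q2 × Q2) ≃ (Q2 × Q2) where
  toFun p := ((p.1.1, p.2.1), (p.1.2, p.2.2))
  invFun p := ((p.1.1, p.2.1), (p.1.2, p.2.2))
  left_inv _ := rfl
  right_inv _ := rfl

/-- The rank-one matrix `x x†`. -/
def pureMat {d : Type*} (x : d → ℂ) : Matrix d d ℂ := vecMulVec x (star x)

/-- Separability of a 16×16 four-qubit matrix (qubit order A',B',A'',B'')
across the partition A = (A',A''), B = (B',B''). -/
def SepAB (ρ : M16) : Prop :=
  ∃ (n : ℕ) (x y : Fin n → Q2 → ℂ),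
    (Matrix.reindex swapMid swapMid ρ) = ∑ k, (pureMat (x k)) ⊗ₖ (pureMat (y k))


/-- `ρ` can be transformed to `ρ'` by SLOCC: `ρ' = c·Σ_k (A_k⊗B_k) ρ (A_k⊗B_k)†`
for finitely many local Kraus pairs and some `c > 0`. -/
def SLOCCto (ρ ρ' : M4) : Prop :=
  ∃ (N : ℕ) (A B : Fin N → Matrix (Fin 2) (Fin 2) ℂ) (c : ℝ),
    0 < c ∧ ρ' = (c : ℂ) • ∑ k, (A k ⊗ₖ B k) * ρ * (A k ⊗ₖ B k)ᴴ

/-- `ρ` and `ρ'` are SLOCC equivalent. -/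
def SLOCCequiv (ρ ρ' : M4) : Prop := SLOCCto ρ ρ' ∧ SLOCCto ρ' ρ

/-- The Bell-diagonal state with weight vector `l`. -/
def rhoBD (l : Fin 4 → ℝ) : M4 := ∑ i, (l i : ℂ) • BellProj i

/-- `l` is a weight vector: nonnegative entries summing to `1`. -/
def IsWeight (l : Fin 4 → ℝ) : Prop := (∀ i, 0 ≤ l i) ∧ ∑ i, l i = 1

/-- `l` is ordered: `λ₁ ≥ λ₂ ≥ λ₃ ≥ λ₄`. -/
def IsOrdered (l : Fin 4 → ℝ) : Prop := l 1 ≤ l 0 ∧ l 2 ≤ l 1 ∧ l 3 ≤ l 2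

/-- A two-qubit density matrix. -/
def IsDensity (ρ : M4) : Prop := ρ.PosSemidef ∧ ρ.trace = 1

/-- Separability of a two-qubit matrix. -/
def Sep2 (ρ : M4) : Prop :=
  ∃ (N : ℕ) (x y : Fin N → Fin 2 → ℂ),
    ρ = ∑ k, (pureMat (x k)) ⊗ₖ (pureMat (y k))

/-! ### Real inequalities -/

theorem iso_le (z : Fin 4 → ℂ) (h : ∑ i, z i ^ 2 = 0) (k : Fin 4) :
    2 * ‖z k‖ ^ 2 ≤ ∑ i, ‖z i‖ ^ 2 := by
  have h1 : z k ^ 2 = - ∑ i ∈ Finset.univ.erase k, z i ^ 2 := by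
    rw [← Finset.add_sum_erase _ _ (Finset.mem_univ k)] at h
    linear_combination h
  have h2 : ‖z k‖ ^ 2 ≤ ∑ i ∈ Finset.univ.erase k, ‖z i‖ ^ 2 := by
    rw [← norm_pow, h1, norm_neg]
    refine (norm_sum_le _ _).trans (le_of_eq ?_)
    simp
  rw [← Finset.add_sum_erase _ _ (Finset.mem_univ k)]
  linarith

theorem pair_le (p q : Fin 4 → ℂ) (h : ∑ i, p i ^ 2 = ∑ i, q i ^ 2) (h0 : ∑ i, p i * q i = 0)
    (k : Fin 4) : 2 * (‖p k‖ ^ 2 + ‖q k‖ ^ 2) ≤ ∑ i, ‖p i‖ ^ 2 + ∑ i, ‖q i‖ ^ 2 := by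
  have e (a b : ℂ) : ‖a + I * b‖ ^ 2 + ‖a - I * b‖ ^ 2 = 2 * (‖a‖ ^ 2 + ‖b‖ ^ 2) := by
    simp only [← Complex.normSq_eq_norm_sq, Complex.normSq_apply]
    simp
    ring
  have I2 : I ^ 2 = -1 := Complex.I_sq
  have h1 := iso_le (fun i => p i + I * q i) (by
    simp only [Fin.sum_univ_four] at *
    linear_combination h + 2 * I * h0 + (q 0 ^ 2 + q 1 ^ 2 + q 2 ^ 2 + q 3 ^ 2) * I2) k
  have h2 := iso_le (fun i => p i - I * q i) (by
    simp only [Fin.sum_univ_four] at *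
    linear_combination h - 2 * I * h0 + (q 0 ^ 2 + q 1 ^ 2 + q 2 ^ 2 + q 3 ^ 2) * I2) k
  have h3 : ∑ i, ‖p i + I * q i‖ ^ 2 + ∑ i, ‖p i - I * q i‖ ^ 2
      = 2 * (∑ i, ‖p i‖ ^ 2 + ∑ i, ‖q i‖ ^ 2) := by
    rw [← Finset.sum_add_distrib, ← Finset.sum_add_distrib, Finset.mul_sum]
    exact Finset.sum_congr rfl fun i _ => e _ _
  have := e (p k) (q k)
  linarith

theorem tri_le (p q : Fin 4 → ℂ) (h : ∑ i, p i ^ 2 = ∑ i, q i ^ 2) :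
    2 * ‖p 0‖ ^ 2 ≤ ∑ i, ‖p i‖ ^ 2 + ∑ i, ‖q i‖ ^ 2 := by
  have h1 : p 0 ^ 2 = ∑ i, q i ^ 2 - ∑ i ∈ Finset.univ.erase 0, p i ^ 2 := by
    rw [← h, ← Finset.add_sum_erase _ _ (Finset.mem_univ (0 : Fin 4))]
    ring
  have h2 : ‖p 0‖ ^ 2 ≤ ∑ i, ‖q i‖ ^ 2 + ∑ i ∈ Finset.univ.erase 0, ‖p i‖ ^ 2 := by
    rw [← norm_pow, h1]
    refine (norm_sub_le _ _).trans (add_le_add ?_ ?_) <;>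
    refine (norm_sum_le _ _).trans (le_of_eq ?_) <;> simp
  rw [← Finset.add_sum_erase _ (fun i => ‖p i‖ ^ 2) (Finset.mem_univ (0 : Fin 4))]
  linarith

/-- Linear constraints satisfied by the transition matrices. -/
structure Good (G : Fin 4 → Fin 4 → ℝ) : Prop where
  nn : ∀ i j, 0 ≤ G i j
  col : ∀ k, k ≠ 0 → 2 * (G 0 0 + G 0 k) ≤ ∑ i, G i 0 + ∑ i, G i k
  row : ∀ i j, i ≠ j → 2 * (G i 3 + G j 3) ≤ ∑ k, G i k + ∑ k, G j k
  tri : ∀ i, 2 * G 0 0 ≤ ∑ k, G k 0 + ∑ k, G i k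

theorem Good.sum {N : ℕ} (G : Fin N → Fin 4 → Fin 4 → ℝ) (c : ℝ) (hc : 0 ≤ c)
    (h : ∀ n, Good (G n)) : Good (fun i j => c * ∑ n, G n i j) := by
  have key (f g : Fin N → ℝ) (hfg : ∀ n, f n ≤ g n) : c * ∑ n, f n ≤ c * ∑ n, g n :=
    mul_le_mul_of_nonneg_left (Finset.sum_le_sum fun n _ => hfg n) hc
  constructor
  · exact fun i j => mul_nonneg hc (Finset.sum_nonneg fun n _ => (h n).nn i j)
  · intro k hk
    have := key _ _ (fun n => (h n).col k hk)
    simp only [Fin.sum_univ_four, Finset.sum_add_distrib, ← Finset.mul_sum] at *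
    linarith
  · intro i j hk
    have := key _ _ (fun n => (h n).row i j hk)
    simp only [Fin.sum_univ_four, Finset.sum_add_distrib, ← Finset.mul_sum] at *
    linarith
  · intro i
    have := key _ _ (fun n => (h n).tri i)
    simp only [Fin.sum_univ_four, Finset.sum_add_distrib, ← Finset.mul_sum] at *
    linarith

theorem good_of_orth (M : Fin 4 → Fin 4 → ℂ) (δ : ℂ)
    (hc : ∀ j k, ∑ i, M i j * M i k = if j = k then δ else 0)
    (hr : ∀ j k, ∑ i, M j i * M k i = if j = k then δ else 0) :
    Good (fun i j => ‖M i j‖ ^ 2) := by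
  have hc1 : ∀ j, ∑ i, M i j ^ 2 = δ := fun j => by simpa [sq] using hc j j
  have hr1 : ∀ j, ∑ i, M j i ^ 2 = δ := fun j => by simpa [sq] using hr j j
  constructor
  · intros; positivity
  · intro k hk
    exact pair_le (fun i => M i 0) (fun i => M i k) (by rw [hc1, hc1])
      (by rw [hc, if_neg (Ne.symm hk)]) 0
  · intro i j hk
    exact pair_le (fun k => M i k) (fun k => M j k) (by rw [hr1, hr1]) (by rw [hr, if_neg hk]) 3
  · intro i
    exact tri_le (fun k => M k 0) (fun k => M i k) (by rw [hc1, hr1])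

theorem ineqA (l : Fin 4 → ℝ) (hlw : IsWeight l) (hl1 : 1 / 2 < l 0)
    (G : Fin 4 → Fin 4 → ℝ) (hG : Good G) :
    ∑ j, G 0 j * l j ≤ l 0 * ∑ i, ∑ j, G i j * l j := by
  obtain ⟨hn, hs⟩ := hlw
  have hn0 := hn 0
  have nn := hG.nn
  have t1 := mul_nonneg (mul_nonneg (hn 0) (by linarith : 0 ≤ 2 * l 0 - 1))
    (add_nonneg (nn 1 0) (add_nonneg (nn 2 0) (nn 3 0)))
  have u (k : Fin 4) (hk : k ≠ 0) := mul_nonneg (mul_nonneg (hn 0) (hn k))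
    (sub_nonneg.2 (hG.col k hk))
  have v (k : Fin 4) := mul_nonneg (mul_nonneg (by linarith : 0 ≤ 2 * l 0 - 1) (hn k)) (nn 0 k)
  have u1 := u 1 (by decide)
  have u2 := u 2 (by decide)
  have u3 := u 3 (by decide)
  have v1 := v 1
  have v2 := v 2
  have v3 := v 3
  simp only [Fin.sum_univ_four] at *
  have e : l 3 = 1 - l 0 - l 1 - l 2 := by linarith
  clear hn
  generalize l 0 = x0 at *
  generalize l 3 = x3 at *
  subst e
  linarith

theorem ineqB (l : Fin 4 → ℝ) (hlw : IsWeight l) (hlo : IsOrdered l) (hl1 : 1 / 2 < l 0)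
    (G : Fin 4 → Fin 4 → ℝ) (hG : Good G) (m : Fin 4) (hm : m ≠ 0) :
    l 3 * (∑ j, G 0 j * l j - 1 / 2 * ∑ i, ∑ j, G i j * l j) ≤
      (l 0 - 1 / 2) * ∑ j, G m j * l j := by
  obtain ⟨hn, hs⟩ := hlw
  obtain ⟨h1, h2, h3⟩ := hlo
  have nn := hG.nn
  have hh : 0 ≤ l 0 - 1 / 2 := by linarith
  have t1 := mul_nonneg (mul_nonneg hh (by linarith : 0 ≤ l 0 - l 3)) (nn m 0)
  have t2 := mul_nonneg (mul_nonneg hh (by linarith : 0 ≤ l 1 - l 3)) (nn m 1)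
  have t3 := mul_nonneg (mul_nonneg hh (by linarith : 0 ≤ l 2 - l 3)) (nn m 2)
  have t4 := mul_nonneg (mul_nonneg hh (hn 3)) (sub_nonneg.2 (hG.tri m))
  have u (k : Fin 4) (hk : k ≠ 0) := mul_nonneg (mul_nonneg (hn 3) (hn k))
    (sub_nonneg.2 (hG.col k hk))
  have u1 := u 1 (by decide)
  have u2 := u 2 (by decide)
  have u3 := u 3 (by decide)
  simp only [Fin.sum_univ_four] at *
  have e : l 0 = 1 - l 1 - l 2 - l 3 := by linarith
  clear hn
  generalize l 0 = x0 at *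
  generalize l 3 = x3 at *
  subst e
  linarith

theorem ineqC (l : Fin 4 → ℝ) (hlw : IsWeight l) (hlo : IsOrdered l) (hl1 : 1 / 2 < l 0)
    (G : Fin 4 → Fin 4 → ℝ) (hG : Good G) (m a b : Fin 4) (hab : a ≠ b)
    (hp : ∀ f : Fin 4 → ℝ, ∑ i, f i = f 0 + f m + f a + f b) :
    (1 / 2 - l 1) * (∑ j, G 0 j * l j - 1 / 2 * ∑ i, ∑ j, G i j * l j) ≤
      (l 0 - 1 / 2) * (1 / 2 * ∑ i, ∑ j, G i j * l j - ∑ j, G m j * l j) := by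
  obtain ⟨hn, hs⟩ := hlw
  obtain ⟨h1, h2, h3⟩ := hlo
  have nn := hG.nn
  have hh : 0 ≤ l 0 - 1 / 2 := by linarith
  have n2 := hn 2
  have n3 := hn 3
  have t0 (i : Fin 4) := mul_nonneg (mul_nonneg hh (by linarith : 0 ≤ l 0 - l 2)) (nn i 0)
  have t1 (i : Fin 4) := mul_nonneg (mul_nonneg hh (by linarith : 0 ≤ l 1 - l 2)) (nn i 1)
  have t4 := mul_nonneg (mul_nonneg hh (sub_nonneg.2 h3)) (sub_nonneg.2 (hG.row a b hab))
  have t5 (i : Fin 4) := mul_nonneg (mul_nonneg hh (by linarith : 0 ≤ l 2 + l 3))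
    (sub_nonneg.2 (hG.tri i))
  have u (k : Fin 4) (hk : k ≠ 0) := mul_nonneg (mul_nonneg
    (by linarith : 0 ≤ l 2 + l 3) (hn k)) (sub_nonneg.2 (hG.col k hk))
  have u1 := u 1 (by decide)
  have u2 := u 2 (by decide)
  have u3 := u 3 (by decide)
  have ta := t0 a
  have tb := t0 b
  have ta' := t1 a
  have tb' := t1 b
  have sa := t5 a
  have sb := t5 b
  clear t0 t1 t5 u
  rw [hp (fun i => ∑ j, G i j * l j)]
  simp only [hp (fun i => G i _)] at *
  simp only [Fin.sum_univ_four] at *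
  have e : l 0 = 1 - l 1 - l 2 - l 3 := by linarith
  clear hn
  generalize l 0 = x0 at *
  generalize l 3 = x3 at *
  subst e
  linarith

/-! ### From the inequalities to the convex hull -/

theorem maj3 (w1 w2 w3 x1 x2 x3 y1 y2 y3 : ℝ) (h12 : w2 ≤ w1) (h23 : w3 ≤ w2)
    (hs : x1 + x2 + x3 = y1 + y2 + y3) (hx1 : x1 ≤ y1) (hx3 : y3 ≤ x3) :
    w1 * x1 + w2 * x2 + w3 * x3 ≤ w1 * y1 + w2 * y2 + w3 * y3 := by
  have e : x2 = y1 + y2 + y3 - x1 - x3 := by linarith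
  subst e
  nlinarith [mul_nonneg (sub_nonneg.2 h12) (sub_nonneg.2 hx1),
    mul_nonneg (sub_nonneg.2 h23) (sub_nonneg.2 hx3)]

theorem sep3 (t u w0 w1 w2 w3 l0 l1 l2 l3 m0 x1 x2 x3 : ℝ) (ht : 0 ≤ t) (ht1 : t ≤ 1)
    (hm : m0 = t * l0 + (1 - t) * (1 / 2)) (hl : l0 + l1 + l2 + l3 = 1)
    (hμ : m0 + x1 + x2 + x3 = 1) (h12 : w2 ≤ w1) (h23 : w3 ≤ w2)
    (hx1 : x1 ≤ t * l1 + (1 - t) * (1 / 2)) (hx3 : t * l3 ≤ x3)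
    (hv : w0 * l0 + w1 * l1 + w2 * l2 + w3 * l3 < u)
    (hs : w0 * (1 / 2) + w1 * (1 / 2) < u) :
    w0 * m0 + w1 * x1 + w2 * x2 + w3 * x3 ≤ u := by
  have h := maj3 w1 w2 w3 x1 x2 x3 (t * l1 + (1 - t) * (1 / 2)) (t * l2) (t * l3) h12 h23
    (by rw [hm] at hμ; linear_combination hμ - t * hl) hx1 hx3
  have a := mul_le_mul_of_nonneg_left hv.le ht
  have b := mul_le_mul_of_nonneg_left hs.le (sub_nonneg.2 ht1)
  rw [hm]
  linarith

theorem perm_cases : ∀ σ : Equiv.Perm (Fin 4), σ 0 = 0 →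
    σ = 1 ∨ σ = Equiv.swap 1 2 ∨ σ = Equiv.swap 2 3 ∨ σ = Equiv.swap 1 3 ∨
    σ = Equiv.swap 1 2 * Equiv.swap 2 3 ∨ σ = Equiv.swap 2 3 * Equiv.swap 1 2 := by
  decide

theorem verts (l : Fin 4 → ℝ) (i j k : Fin 4)
    (h : ∃ σ : Equiv.Perm (Fin 4), σ 0 = 0 ∧ σ 1 = i ∧ σ 2 = j ∧ σ 3 = k) :
    ∃ σ : Equiv.Perm (Fin 4), σ 0 = 0 ∧ ![l 0, l i, l j, l k] = l ∘ σ := by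
  obtain ⟨σ, h0, h1, h2, h3⟩ := h
  refine ⟨σ, h0, ?_⟩
  subst h1 h2 h3
  ext x
  fin_cases x <;> simp [h0]

theorem hull_of_ineq (l μ : Fin 4 → ℝ) (hlw : IsWeight l)
    (hl1 : 1 / 2 < l 0) (hμw : IsWeight μ) (hμ1 : 1 / 2 ≤ μ 0)
    (ha : μ 0 ≤ l 0)
    (hb : ∀ m, m ≠ 0 → l 3 * (μ 0 - 1 / 2) ≤ (l 0 - 1 / 2) * μ m)
    (hc : ∀ m, m ≠ 0 → (1 / 2 - l 1) * (μ 0 - 1 / 2) ≤ (l 0 - 1 / 2) * (1 / 2 - μ m)) :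
    μ ∈ convexHull ℝ
        (({v | ∃ σ : Equiv.Perm (Fin 4), σ 0 = 0 ∧ v = l ∘ σ} :
            Set (Fin 4 → ℝ)) ∪
          {![1/2, 1/2, 0, 0], ![1/2, 0, 1/2, 0], ![1/2, 0, 0, 1/2]}) := by
  by_contra hne
  have hfin : (({v | ∃ σ : Equiv.Perm (Fin 4), σ 0 = 0 ∧ v = l ∘ σ} :
            Set (Fin 4 → ℝ)) ∪
          {![1/2, 1/2, 0, 0], ![1/2, 0, 1/2, 0], ![1/2, 0, 0, 1/2]}).Finite := by
    refine Set.Finite.union ?_ (by simp)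
    refine (Set.finite_range (fun σ : Equiv.Perm (Fin 4) => l ∘ σ)).subset ?_
    rintro v ⟨σ, _, rfl⟩
    exact ⟨σ, rfl⟩
  obtain ⟨f, u, hf, hu⟩ := geometric_hahn_banach_closed_point (convex_convexHull ℝ _)
    (hfin.isClosed_convexHull ℝ) hne
  have hrep : ∀ v : Fin 4 → ℝ, f v = f (Pi.single 0 1) * v 0 + f (Pi.single 1 1) * v 1
      + f (Pi.single 2 1) * v 2 + f (Pi.single 3 1) * v 3 := by
    intro v
    have : v = v 0 • Pi.single 0 1 + v 1 • Pi.single 1 1 + v 2 • Pi.single 2 1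
        + v 3 • Pi.single 3 1 := by
      ext i; fin_cases i <;> simp
    conv_lhs => rw [this]
    simp only [map_add, map_smul, smul_eq_mul]
    ring
  have hV (i j k : Fin 4)
    (h : ∃ σ : Equiv.Perm (Fin 4), σ 0 = 0 ∧ σ 1 = i ∧ σ 2 = j ∧ σ 3 = k) := 
    hf _ (subset_convexHull ℝ _ (Or.inl (verts l i j k h)))
  have s1 := hf ![1/2, 1/2, 0, 0] (subset_convexHull ℝ _ (Or.inr (by simp)))
  have s2 := hf ![1/2, 0, 1/2, 0] (subset_convexHull ℝ _ (Or.inr (by simp)))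
  have s3 := hf ![1/2, 0, 0, 1/2] (subset_convexHull ℝ _ (Or.inr (by simp)))
  have v1 := hV 1 2 3 (by decide)
  have v2 := hV 1 3 2 (by decide)
  have v3 := hV 2 1 3 (by decide)
  have v4 := hV 2 3 1 (by decide)
  have v5 := hV 3 1 2 (by decide)
  have v6 := hV 3 2 1 (by decide)
  rw [hrep] at v1 v2 v3 v4 v5 v6 s1 s2 s3 hu
  simp at v1 v2 v3 v4 v5 v6 s1 s2 s3
  generalize f (Pi.single 0 1) = w0 at *
  generalize f (Pi.single 1 1) = w1 at *
  generalize f (Pi.single 2 1) = w2 at *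
  generalize f (Pi.single 3 1) = w3 at *
  obtain ⟨-, hls⟩ := hlw
  obtain ⟨-, hms⟩ := hμw
  simp only [Fin.sum_univ_four] at hls hms
  have hh : 0 < l 0 - 1 / 2 := by linarith
  obtain ⟨t, ht⟩ : ∃ t, t = (μ 0 - 1 / 2) / (l 0 - 1 / 2) := ⟨_, rfl⟩
  have ht' : μ 0 - 1 / 2 = t * (l 0 - 1 / 2) := by rw [ht, div_mul_cancel₀ _ hh.ne']
  have t0 : 0 ≤ t := by rw [ht]; exact div_nonneg (by linarith) hh.le
  have t1 : t ≤ 1 := by rw [ht, div_le_one hh]; linarith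
  have hm0 : μ 0 = t * l 0 + (1 - t) * (1 / 2) := by linarith
  have hb' : ∀ m, m ≠ 0 → t * l 3 ≤ μ m := fun m hm => by
    have := hb m hm
    rw [ht'] at this
    exact le_of_mul_le_mul_left (by linarith) hh
  have hc' : ∀ m, m ≠ 0 → μ m ≤ t * l 1 + (1 - t) * (1 / 2) := fun m hm => by
    have := hc m hm
    rw [ht'] at this
    have := le_of_mul_le_mul_left (by linarith :
      (l 0 - 1 / 2) * ((1 / 2 - l 1) * t) ≤ (l 0 - 1 / 2) * (1 / 2 - μ m)) hh
    linarith
  have b1 := hb' 1 (by decide)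
  have b2 := hb' 2 (by decide)
  have b3 := hb' 3 (by decide)
  have c1 := hc' 1 (by decide)
  have c2 := hc' 2 (by decide)
  have c3 := hc' 3 (by decide)
  have key := fun a b c x y z => sep3 t u w0 a b c (l 0) (l 1) (l 2) (l 3) (μ 0) x y z t0 t1 hm0 hls
  rcases le_total w1 w2 with h12 | h12 <;> rcases le_total w2 w3 with h23 | h23 <;>
    rcases le_total w1 w3 with h13 | h13
  · have := key w3 w2 w1 (μ 3) (μ 2) (μ 1) (by linarith) h23 h12 c3 b1 (by linarith) (by linarith)
    linarith
  · have := key w3 w2 w1 (μ 3) (μ 2) (μ 1) (by linarith) h23 h12 c3 b1 (by linarith) (by linarith)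
    linarith
  · have := key w2 w3 w1 (μ 2) (μ 3) (μ 1) (by linarith) h23 h13 c2 b1 (by linarith) (by linarith)
    linarith
  · have := key w2 w1 w3 (μ 2) (μ 1) (μ 3) (by linarith) h12 h13 c2 b3 (by linarith) (by linarith)
    linarith
  · have := key w3 w1 w2 (μ 3) (μ 1) (μ 2) (by linarith) h13 h12 c3 b2 (by linarith) (by linarith)
    linarith
  · have := key w1 w3 w2 (μ 1) (μ 3) (μ 2) (by linarith) h13 h23 c1 b2 (by linarith) (by linarith)
    linarith
  · have := key w1 w2 w3 (μ 1) (μ 2) (μ 3) (by linarith) h12 h23 c1 b3 (by linarith) (by linarith)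
    linarith
  · have := key w1 w2 w3 (μ 1) (μ 2) (μ 3) (by linarith) h12 h23 c1 b3 (by linarith) (by linarith)
    linarith

/-! ### Transition matrices -/

theorem inv2 : invSqrt2 * invSqrt2 = 1 / 2 := by
  unfold invSqrt2
  rw [← Complex.ofReal_mul, ← mul_inv, Real.mul_self_sqrt (by norm_num)]
  norm_num

theorem star_inv2 : (starRingEnd ℂ) invSqrt2 = invSqrt2 := by
  unfold invSqrt2
  exact Complex.conj_ofReal _

/-- Matrix element of `K` between Bell states. -/
def amp (K : M4) (i j : Fin 4) : ℂ := star (bell i) ⬝ᵥ (K *ᵥ bell j)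

/-- Phases of the magic basis. -/
def ph : Fin 4 → ℂ := ![1, I, I, 1]

theorem bell_orth (i j : Fin 4) : star (bell i) ⬝ᵥ bell j = if i = j then 1 else 0 := by
  have h := inv2
  fin_cases i <;> fin_cases j <;>
    simp [bell, dotProduct, Fintype.sum_prod_type, star_inv2, h] <;> norm_num

/-- Twice the matrix elements of `A ⊗ B` in the Bell basis. -/
def Nm (A B : Matrix (Fin 2) (Fin 2) ℂ) : Matrix (Fin 4) (Fin 4) ℂ :=
      !![A 0 0 * B 0 0 + A 0 1 * B 0 1 + A 1 0 * B 1 0 + A 1 1 * B 1 1,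
          A 0 0 * B 0 0 - A 0 1 * B 0 1 + A 1 0 * B 1 0 - A 1 1 * B 1 1,
          A 0 0 * B 0 1 + A 0 1 * B 0 0 + A 1 0 * B 1 1 + A 1 1 * B 1 0,
          A 0 0 * B 0 1 - A 0 1 * B 0 0 + A 1 0 * B 1 1 - A 1 1 * B 1 0;
          A 0 0 * B 0 0 + A 0 1 * B 0 1 - A 1 0 * B 1 0 - A 1 1 * B 1 1,
          A 0 0 * B 0 0 - A 0 1 * B 0 1 - A 1 0 * B 1 0 + A 1 1 * B 1 1,
          A 0 0 * B 0 1 + A 0 1 * B 0 0 - A 1 0 * B 1 1 - A 1 1 * B 1 0,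
          A 0 0 * B 0 1 - A 0 1 * B 0 0 - A 1 0 * B 1 1 + A 1 1 * B 1 0;
          A 0 0 * B 1 0 + A 0 1 * B 1 1 + A 1 0 * B 0 0 + A 1 1 * B 0 1,
          A 0 0 * B 1 0 - A 0 1 * B 1 1 + A 1 0 * B 0 0 - A 1 1 * B 0 1,
          A 0 0 * B 1 1 + A 0 1 * B 1 0 + A 1 0 * B 0 1 + A 1 1 * B 0 0,
          A 0 0 * B 1 1 - A 0 1 * B 1 0 + A 1 0 * B 0 1 - A 1 1 * B 0 0;
          A 0 0 * B 1 0 + A 0 1 * B 1 1 - A 1 0 * B 0 0 - A 1 1 * B 0 1,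
          A 0 0 * B 1 0 - A 0 1 * B 1 1 - A 1 0 * B 0 0 + A 1 1 * B 0 1,
          A 0 0 * B 1 1 + A 0 1 * B 1 0 - A 1 0 * B 0 1 - A 1 1 * B 0 0,
          A 0 0 * B 1 1 - A 0 1 * B 1 0 - A 1 0 * B 0 1 + A 1 1 * B 0 0]

/-- Signature of the determinant form in the Bell basis. -/
def eps : Fin 4 → ℂ := ![1, -1, -1, 1]

set_option maxHeartbeats 2000000 in
theorem Nm_col (A B : Matrix (Fin 2) (Fin 2) ℂ) (j k : Fin 4) :
    ∑ i, eps i * (Nm A B i j * Nm A B i k) = if j = k then eps j * (4 * (A.det * B.det)) else 0 := by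
  simp only [Fin.sum_univ_four, Matrix.det_fin_two]
  fin_cases j <;> fin_cases k <;> simp [Nm, eps] <;> ring

set_option maxHeartbeats 2000000 in
theorem Nm_row (A B : Matrix (Fin 2) (Fin 2) ℂ) (j k : Fin 4) :
    ∑ i, eps i * (Nm A B j i * Nm A B k i) = if j = k then eps j * (4 * (A.det * B.det)) else 0 := by
  simp only [Fin.sum_univ_four, Matrix.det_fin_two]
  fin_cases j <;> fin_cases k <;> simp [Nm, eps] <;> ring

set_option maxHeartbeats 2000000 in
theorem amp_eq (A B : Matrix (Fin 2) (Fin 2) ℂ) (i j : Fin 4) :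
    amp (A ⊗ₖ B) i j = Nm A B i j / 2 := by
  have h := inv2
  fin_cases i <;> fin_cases j <;>
    simp [amp, bell, dotProduct, mulVec, Fintype.sum_prod_type, star_inv2,
      Matrix.kroneckerMap_apply, Nm] <;> grind

theorem amp_good (A B : Matrix (Fin 2) (Fin 2) ℂ) :
    Good (fun i j => ‖amp (A ⊗ₖ B) i j‖ ^ 2) := by
  have hn : ∀ i j, ‖amp (A ⊗ₖ B) i j‖ = ‖ph i * ph j * amp (A ⊗ₖ B) i j‖ := by
    intro i j
    fin_cases i <;> fin_cases j <;> simp [ph]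
  have hp : ∀ i, ph i * ph i = eps i := by
    intro i
    fin_cases i <;> simp [ph, eps]
  have he : ∀ i, eps i * eps i = 1 := by
    intro i
    fin_cases i <;> simp [eps]
  simp only [hn]
  apply good_of_orth _ (A.det * B.det)
  · intro j k
    have e : ∀ i, ph i * ph j * amp (A ⊗ₖ B) i j * (ph i * ph k * amp (A ⊗ₖ B) i k)
        = ph j * ph k / 4 * (eps i * (Nm A B i j * Nm A B i k)) := by
      intro i
      rw [amp_eq, amp_eq, ← hp i]
      ring
    simp only [e]
    rw [← Finset.mul_sum, Nm_col]
    split_ifs with hjk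
    · subst hjk
      rw [hp]
      linear_combination (A.det * B.det) * he j
    · simp
  · intro j k
    have e : ∀ i, ph j * ph i * amp (A ⊗ₖ B) j i * (ph k * ph i * amp (A ⊗ₖ B) k i)
        = ph j * ph k / 4 * (eps i * (Nm A B j i * Nm A B k i)) := by
      intro i
      rw [amp_eq, amp_eq, ← hp i]
      ring
    simp only [e]
    rw [← Finset.mul_sum, Nm_row]
    split_ifs with hjk
    · subst hjk
      rw [hp]
      linear_combination (A.det * B.det) * he j
    · simp

theorem expect (K : M4) (l : Fin 4 → ℝ) (i : Fin 4) :
    star (bell i) ⬝ᵥ ((K * rhoBD l * Kᴴ) *ᵥ bell i)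
      = ((∑ j, ‖amp K i j‖ ^ 2 * l j : ℝ) : ℂ) := by
  have h (j : Fin 4) : star (bell i) ⬝ᵥ ((K * BellProj j * Kᴴ) *ᵥ bell i)
      = ((‖amp K i j‖ ^ 2 : ℝ) : ℂ) := by
    have e : star (bell j) ⬝ᵥ (Kᴴ *ᵥ bell i) = star (amp K i j) := by
      unfold amp
      rw [Matrix.star_dotProduct, Matrix.star_mulVec, Matrix.conjTranspose_conjTranspose,
        ← Matrix.dotProduct_mulVec]
    rw [← Matrix.mulVec_mulVec, ← Matrix.mulVec_mulVec, BellProj, Matrix.vecMulVec_mulVec, e]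
    rw [op_smul_eq_smul, Matrix.mulVec_smul, dotProduct_smul]
    change star (amp K i j) • amp K i j = _
    rw [smul_eq_mul, Complex.star_def, Complex.conj_mul']
    push_cast
    rfl
  rw [rhoBD, Matrix.mul_sum, Matrix.sum_mul, Matrix.sum_mulVec, dotProduct_sum]
  push_cast
  refine Finset.sum_congr rfl fun j _ => ?_
  rw [Matrix.mul_smul, Matrix.smul_mul, Matrix.smul_mulVec, dotProduct_smul, h, smul_eq_mul]
  push_cast
  ring

theorem expect_one (l : Fin 4 → ℝ) (i : Fin 4) :
    star (bell i) ⬝ᵥ (rhoBD l *ᵥ bell i) = (l i : ℂ) := by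
  have h := expect 1 l i
  simp only [Matrix.one_mul, Matrix.conjTranspose_one, Matrix.mul_one] at h
  rw [h]
  simp only [amp, Matrix.one_mulVec, bell_orth]
  congr 1
  rw [Finset.sum_eq_single i]
  · simp
  · intro j _ hj; simp [Ne.symm hj]
  · simp

theorem exists_good (l μ : Fin 4 → ℝ) (h : SLOCCto (rhoBD l) (rhoBD μ)) :
    ∃ G, Good G ∧ ∀ i, μ i = ∑ j, G i j * l j := by
  obtain ⟨N, A, B, c, hc, h⟩ := h
  refine ⟨_, Good.sum _ c hc.le fun n => amp_good (A n) (B n), fun i => ?_⟩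
  have h1 := expect_one μ i
  rw [h, Matrix.smul_mulVec, dotProduct_smul, Matrix.sum_mulVec, dotProduct_sum] at h1
  simp only [expect] at h1
  rw [smul_eq_mul, ← Complex.ofReal_sum, ← Complex.ofReal_mul, Complex.ofReal_inj] at h1
  rw [← h1, Finset.sum_comm, Finset.mul_sum]
  refine Finset.sum_congr rfl fun j _ => ?_
  rw [← Finset.sum_mul, mul_assoc]

theorem forward (l μ : Fin 4 → ℝ) (hlw : IsWeight l) (hlo : IsOrdered l)
    (hl1 : 1 / 2 < l 0) (hμw : IsWeight μ) (hμ1 : 1 / 2 ≤ μ 0)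
    (h : SLOCCto (rhoBD l) (rhoBD μ)) :
      μ ∈ convexHull ℝ
        (({v | ∃ σ : Equiv.Perm (Fin 4), σ 0 = 0 ∧ v = l ∘ σ} :
            Set (Fin 4 → ℝ)) ∪
          {![1/2, 1/2, 0, 0], ![1/2, 0, 1/2, 0], ![1/2, 0, 0, 1/2]}) := by
  obtain ⟨G, hG, hm⟩ := exists_good l μ h
  have hs := hμw.2
  apply hull_of_ineq l μ hlw hl1 hμw hμ1
  · have := ineqA l hlw hl1 G hG
    simp only [← hm] at this
    rwa [hs, mul_one] at this
  · intro m hm0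
    have := ineqB l hlw hlo hl1 G hG m hm0
    simp only [← hm] at this
    rwa [hs, mul_one] at this
  · have key := ineqC l hlw hlo hl1 G hG
    simp only [← hm] at key
    rw [hs, mul_one] at key
    intro m hm0
    fin_cases m
    · exact absurd rfl hm0
    · exact key 1 2 3 (by decide) (fun f => by rw [Fin.sum_univ_four])
    · exact key 2 1 3 (by decide) (fun f => by rw [Fin.sum_univ_four]; ring)
    · exact key 3 1 2 (by decide) (fun f => by rw [Fin.sum_univ_four]; ring)

/-! ### Achievability -/

theorem slocc_iff (ρ ρ' : M4) : SLOCCto ρ ρ' ↔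
    ∃ (N : ℕ) (A B : Fin N → Matrix (Fin 2) (Fin 2) ℂ),
      ρ' = ∑ k, (A k ⊗ₖ B k) * ρ * (A k ⊗ₖ B k)ᴴ := by
  constructor
  · rintro ⟨N, A, B, c, hc, h⟩
    refine ⟨N, fun k => ((Real.sqrt c : ℝ) : ℂ) • A k, B, ?_⟩
    rw [h, Finset.smul_sum]
    refine Finset.sum_congr rfl fun k _ => ?_
    have : ((Real.sqrt c : ℝ) : ℂ) * ((Real.sqrt c : ℝ) : ℂ) = c := by
      rw [← Complex.ofReal_mul, Real.mul_self_sqrt hc.le]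
    rw [Matrix.smul_kronecker, Matrix.conjTranspose_smul, Matrix.smul_mul, Matrix.smul_mul,
      Matrix.mul_smul, smul_smul, Complex.star_def, Complex.conj_ofReal, this]
  · rintro ⟨N, A, B, h⟩
    exact ⟨N, A, B, 1, one_pos, by simpa using h⟩

theorem slocc_smul (ρ ρ' : M4) (a : ℝ) (ha : 0 ≤ a) (h : SLOCCto ρ ρ') :
    SLOCCto ρ ((a : ℂ) • ρ') := by
  rcases ha.eq_or_lt with rfl | ha
  · exact (slocc_iff _ _).2 ⟨0, Fin.elim0, Fin.elim0, by simp⟩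
  · obtain ⟨N, A, B, c, hc, h⟩ := h
    refine ⟨N, A, B, a * c, mul_pos ha hc, ?_⟩
    rw [h, smul_smul]
    push_cast
    rfl

theorem slocc_add (ρ ρ₁ ρ₂ : M4) (h₁ : SLOCCto ρ ρ₁) (h₂ : SLOCCto ρ ρ₂) :
    SLOCCto ρ (ρ₁ + ρ₂) := by
  rw [slocc_iff] at *
  obtain ⟨N, A, B, h⟩ := h₁
  obtain ⟨N', A', B', h'⟩ := h₂
  refine ⟨N + N', Fin.append A A', Fin.append B B', ?_⟩
  rw [Fin.sum_univ_add, h, h']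
  simp

theorem slocc_conj (ρ ρ' : M4) (U V : Matrix (Fin 2) (Fin 2) ℂ) (h : SLOCCto ρ ρ') :
    SLOCCto ρ ((U ⊗ₖ V) * ρ' * (U ⊗ₖ V)ᴴ) := by
  rw [slocc_iff] at *
  obtain ⟨N, A, B, h⟩ := h
  refine ⟨N, fun k => U * A k, fun k => V * B k, ?_⟩
  rw [h, Matrix.mul_sum, Matrix.sum_mul]
  refine Finset.sum_congr rfl fun k _ => ?_
  rw [Matrix.mul_kronecker_mul, Matrix.conjTranspose_mul]
  simp only [Matrix.mul_assoc]

theorem rhoBD_comb (a b : ℝ) (x y : Fin 4 → ℝ) :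
    rhoBD (a • x + b • y) = (a : ℂ) • rhoBD x + (b : ℂ) • rhoBD y := by
  simp only [rhoBD, Finset.smul_sum, ← Finset.sum_add_distrib, smul_smul, ← add_smul]
  refine Finset.sum_congr rfl fun i _ => ?_
  simp

theorem reach_convex (ρ : M4) : Convex ℝ {μ | SLOCCto ρ (rhoBD μ)} := by
  intro x hx y hy a b ha hb _
  simp only [Set.mem_ofPred_eq] at *
  rw [rhoBD_comb]
  exact slocc_add _ _ _ (slocc_smul _ _ _ ha hx) (slocc_smul _ _ _ hb hy)

theorem conj_bell (K : M4) (x : Q2 → ℂ) :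
    K * vecMulVec x (star x) * Kᴴ = vecMulVec (K *ᵥ x) (star (K *ᵥ x)) := by
  rw [Matrix.mul_vecMulVec, Matrix.vecMulVec_mul, Matrix.star_mulVec]

theorem rho_conj (K : M4) (σ : Equiv.Perm (Fin 4)) (z : Fin 4 → ℂ) (hz : ∀ i, z i * star (z i) = 1)
    (h : ∀ i, K *ᵥ bell i = z i • bell (σ i)) (μ : Fin 4 → ℝ) :
    K * rhoBD μ * Kᴴ = rhoBD (μ ∘ σ.symm) := by
  have e (i : Fin 4) : K * BellProj i * Kᴴ = BellProj (σ i) := by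
    rw [BellProj, conj_bell, h, star_smul, Matrix.smul_vecMulVec, Matrix.vecMulVec_smul,
      smul_smul, hz, one_smul, BellProj]
  rw [rhoBD, rhoBD, Matrix.mul_sum, Matrix.sum_mul, ← Equiv.sum_comp σ (fun i => (((μ ∘ σ.symm) i : ℝ) : ℂ) • BellProj i)]
  refine Finset.sum_congr rfl fun i _ => ?_
  rw [Matrix.mul_smul, Matrix.smul_mul, e]
  simp

theorem swap12 (ρ : M4) (μ : Fin 4 → ℝ) (h : SLOCCto ρ (rhoBD μ)) :
    SLOCCto ρ (rhoBD (μ ∘ Equiv.swap 1 2)) := by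
  have := slocc_conj _ _ !![invSqrt2, invSqrt2; invSqrt2, -invSqrt2]
    !![invSqrt2, invSqrt2; invSqrt2, -invSqrt2] h
  rw [rho_conj _ (Equiv.swap 1 2) ![1, 1, 1, -1]] at this
  · simpa using this
  · intro i; fin_cases i <;> simp
  · have h2 := inv2
    have e1 : Equiv.swap (1 : Fin 4) 2 0 = 0 := by decide
    have e2 : Equiv.swap (1 : Fin 4) 2 3 = 3 := by decide
    intro i
    ext ⟨a, b⟩
    fin_cases i <;> fin_cases a <;> fin_cases b <;>
    simp [bell, mulVec, dotProduct, Fintype.sum_prod_type, Matrix.kroneckerMap_apply, e1, e2] <;>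
    grind

theorem swap23 (ρ : M4) (μ : Fin 4 → ℝ) (h : SLOCCto ρ (rhoBD μ)) :
    SLOCCto ρ (rhoBD (μ ∘ Equiv.swap 2 3)) := by
  have := slocc_conj _ _ !![1, 0; 0, I] !![1, 0; 0, -I] h
  rw [rho_conj _ (Equiv.swap 2 3) ![1, 1, -I, -I]] at this
  · simpa using this
  · intro i; fin_cases i <;> simp
  · have e1 : Equiv.swap (2 : Fin 4) 3 0 = 0 := by decide
    have e2 : Equiv.swap (2 : Fin 4) 3 1 = 1 := by decide
    intro i
    ext ⟨a, b⟩
    fin_cases i <;> fin_cases a <;> fin_cases b <;>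
    simp [bell, mulVec, dotProduct, Fintype.sum_prod_type, Matrix.kroneckerMap_apply, e1, e2]

theorem reach_sep (l : Fin 4 → ℝ) (hp : 0 < l 0 + l 1) :
    SLOCCto (rhoBD l) (rhoBD ![1/2, 1/2, 0, 0]) := by
  refine ⟨2, ![!![1, 0; 0, 0], !![0, 0; 1, 0]], ![!![1, 0; 0, 0], !![0, 0; 1, 0]],
    (l 0 + l 1)⁻¹, inv_pos.2 hp, ?_⟩
  have h2 := inv2
  have hne : (l 0 : ℂ) + l 1 ≠ 0 := by exact_mod_cast hp.ne'
  ext ⟨a, b⟩ ⟨a', b'⟩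
  fin_cases a <;> fin_cases b <;> fin_cases a' <;> fin_cases b' <;>
  simp [rhoBD, BellProj, bell, Fin.sum_univ_four, Fin.sum_univ_two, Matrix.mul_apply, vecMulVec,
    Fintype.sum_prod_type, Matrix.kroneckerMap_apply, star_inv2, h2] <;>
  (try field_simp) <;> (try ring)

theorem backward (l μ : Fin 4 → ℝ) (hlw : IsWeight l) (hl1 : 1 / 2 < l 0)
    (h : μ ∈ convexHull ℝ
        (({v | ∃ σ : Equiv.Perm (Fin 4), σ 0 = 0 ∧ v = l ∘ σ} :
            Set (Fin 4 → ℝ)) ∪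
          {![1/2, 1/2, 0, 0], ![1/2, 0, 1/2, 0], ![1/2, 0, 0, 1/2]})) :
    SLOCCto (rhoBD l) (rhoBD μ) := by
  have h0 : SLOCCto (rhoBD l) (rhoBD l) :=
    (slocc_iff _ _).2 ⟨1, fun _ => 1, fun _ => 1, by simp⟩
  have hs := reach_sep l (by have := hlw.1 1; linarith)
  have hs2 := swap12 _ _ hs
  have hs3 := swap23 _ _ hs2
  refine convexHull_min ?_ (reach_convex (rhoBD l)) h
  rintro v (⟨σ, h1, rfl⟩ | hv)
  · have a := swap12 _ _ h0
    have b := swap23 _ _ h0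
    rcases perm_cases σ h1 with rfl | rfl | rfl | rfl | rfl | rfl
    · exact h0
    · exact a
    · exact b
    · have c := swap12 _ _ (swap23 _ _ a)
      have e : Equiv.swap (1 : Fin 4) 3
          = Equiv.swap 1 2 * Equiv.swap 2 3 * Equiv.swap 1 2 := by decide
      rw [e]
      exact c
    · exact swap23 _ _ a
    · exact swap12 _ _ b
  · simp only [Set.mem_insert_iff, Set.mem_singleton_iff] at hv
    rcases hv with rfl | rfl | rfl
    · exact hs
    · change SLOCCto _ _
      convert hs2 using 2
      ext i; fin_cases i <;> rfl
    · change SLOCCto _ _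
      convert hs3 using 2
      ext i; fin_cases i <;> rfl

/-- for an ordered weight vector `λ` with `λ₁ > 1/2` and any weight
vector `μ` with `μ₁ ≥ 1/2`, `ρ_BD(λ)` can be transformed to `ρ_BD(μ)` by SLOCC iff
`μ` lies in the convex hull of the six permuted vectors `(λ₁, λ_{π(2)}, λ_{π(3)}, λ_{π(4)})`
together with `λ₁₂, λ₁₃, λ₁₄`. -/
theorem stmt12 (l μ : Fin 4 → ℝ) (hlw : IsWeight l) (hlo : IsOrdered l)
    (hl1 : 1 / 2 < l 0) (hμw : IsWeight μ) (hμ1 : 1 / 2 ≤ μ 0) :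
    SLOCCto (rhoBD l) (rhoBD μ) ↔
      μ ∈ convexHull ℝ
        (({v | ∃ σ : Equiv.Perm (Fin 4), σ 0 = 0 ∧ v = l ∘ σ} :
            Set (Fin 4 → ℝ)) ∪
          {![1/2, 1/2, 0, 0], ![1/2, 0, 1/2, 0], ![1/2, 0, 0, 1/2]}) := by
  exact ⟨forward l μ hlw hlo hl1 hμw hμ1, backward l μ hlw hl1⟩

end Paper
end
end

section
/- Every two-qubit density matrix ρ is SLOCC equivalent to at least one of the following: (1) a Bell-diagonal state ρ_BD(λ) with ordered weight vector λ; (2) a separable two-qubit density matrix; or (3) the state ρ_ND(b) = (1/4)·[[2,0,0,0],[0,1,2b,0],[0,2b,1,0],[0,0,0,0]] (written in the product basis |00⟩,|01⟩,|10⟩,|11⟩) for some real b with 0 < b ≤ 1/2. -/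
open Matrix Complex
open scoped Kronecker ComplexOrder

noncomputable section
namespace Paper

/-- Identification of the product basis `|00⟩,|01⟩,|10⟩,|11⟩` with `Fin 4`. -/
def idx4 : Q2 → Fin 4 := fun p => ⟨2 * p.1.val + p.2.val, by omega⟩

/-- The non-Bell-diagonal normal form
`ρ_ND(b) = (1/4)·[[2,0,0,0],[0,1,2b,0],[0,2b,1,0],[0,0,0,0]]`. -/
def rhoND (b : ℝ) : M4 := fun p q =>
  (1 / 4 : ℂ) *
    !![2, 0, 0, 0; 0, 1, 2 * (b : ℂ), 0; 0, 2 * (b : ℂ), 1, 0; 0, 0, 0, 0]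
      (idx4 p) (idx4 q)

/-- The Bell-diagonal state
`ρ'_ND(b) = (1/2)·[[0,0,0,0],[0,1,−2b,0],[0,−2b,1,0],[0,0,0,0]]`. -/
def rhoND' (b : ℝ) : M4 := fun p q =>
  (1 / 2 : ℂ) *
    !![0, 0, 0, 0; 0, 1, -2 * (b : ℂ), 0; 0, -2 * (b : ℂ), 1, 0; 0, 0, 0, 0]
      (idx4 p) (idx4 q)

abbrev M2 := Matrix (Fin 2) (Fin 2) ℂ

def KK (A B : M2) (ρ : M4) : M4 := (A ⊗ₖ B) * ρ * (A ⊗ₖ B)ᴴ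

lemma KK_comp (A B A' B' : M2) (ρ : M4) : KK A B (KK A' B' ρ) = KK (A * A') (B * B') ρ := by
  unfold KK
  rw [Matrix.mul_kronecker_mul, conjTranspose_mul]
  simp only [Matrix.mul_assoc]

lemma KK_one (ρ : M4) : KK 1 1 ρ = ρ := by
  simp [KK]

lemma KK_smul (A B : M2) (c : ℂ) (ρ : M4) : KK A B (c • ρ) = c • KK A B ρ := by
  simp [KK]

lemma KK_sum {ι : Type*} (s : Finset ι) (A B : M2) (f : ι → M4) :
    KK A B (∑ i ∈ s, f i) = ∑ i ∈ s, KK A B (f i) := by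
  simp [KK, Matrix.mul_sum, Matrix.sum_mul]

lemma KK_psd (A B : M2) {ρ : M4} (h : ρ.PosSemidef) : (KK A B ρ).PosSemidef :=
  h.mul_mul_conjTranspose_same _

def LE (ρ ρ' : M4) : Prop :=
  ∃ (A B : M2) (c : ℝ), A.det ≠ 0 ∧ B.det ≠ 0 ∧ 0 < c ∧ ρ' = (c : ℂ) • KK A B ρ

lemma LE.trans {a b c : M4} (h1 : LE a b) (h2 : LE b c) : LE a c := by
  obtain ⟨A, B, x, hA, hB, hx, rfl⟩ := h1
  obtain ⟨A', B', y, hA', hB', hy, rfl⟩ := h2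
  refine ⟨A' * A, B' * B, y * x, ?_, ?_, by positivity, ?_⟩
  · rw [det_mul]; exact mul_ne_zero hA' hA
  · rw [det_mul]; exact mul_ne_zero hB' hB
  · rw [KK_smul, KK_comp, smul_smul]; push_cast; rfl

lemma LE.symm {a b : M4} (h1 : LE a b) : LE b a := by
  obtain ⟨A, B, x, hA, hB, hx, rfl⟩ := h1
  have hA' : IsUnit A.det := isUnit_iff_ne_zero.2 hA
  have hB' : IsUnit B.det := isUnit_iff_ne_zero.2 hB
  refine ⟨A⁻¹, B⁻¹, x⁻¹, ?_, ?_, by positivity, ?_⟩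
  · rw [det_nonsing_inv]; simpa using hA
  · rw [det_nonsing_inv]; simpa using hB
  · rw [KK_smul, KK_comp, smul_smul, nonsing_inv_mul _ hA', nonsing_inv_mul _ hB', KK_one]
    have : (x : ℂ) ≠ 0 := by exact_mod_cast hx.ne'
    push_cast
    rw [inv_mul_cancel₀ this, one_smul]

lemma LE.to {a b : M4} (h : LE a b) : SLOCCto a b := by
  obtain ⟨A, B, x, hA, hB, hx, rfl⟩ := h
  exact ⟨1, fun _ => A, fun _ => B, x, hx, by simp [KK]⟩

lemma LE.equiv {a b : M4} (h : LE a b) : SLOCCequiv a b := ⟨h.to, h.symm.to⟩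

lemma LE.psd {a b : M4} (h : LE a b) (ha : a.PosSemidef) : b.PosSemidef := by
  obtain ⟨A, B, x, hA, hB, hx, rfl⟩ := h
  exact (KK_psd A B ha).smul (by exact_mod_cast hx.le)

lemma LE.ne_zero {a b : M4} (h : LE a b) (ha : a ≠ 0) : b ≠ 0 := by
  rintro rfl
  obtain ⟨A, B, x, hA, hB, hx, rfl⟩ := h.symm
  exact ha (by simp [KK])

/-- vec of a matrix -/
def vc (V : M2) : Q2 → ℂ := fun p => V p.1 p.2

lemma vc_mul (A B V : M2) : (A ⊗ₖ B) *ᵥ vc V = vc (A * V * Bᵀ) := by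
  ext ⟨i, j⟩
  simp [vc, mulVec, dotProduct, Matrix.mul_apply, Fintype.sum_prod_type, Fin.sum_univ_two]
  ring

lemma KK_pure (A B V : M2) : KK A B (pureMat (vc V)) = pureMat (vc (A * V * Bᵀ)) := by
  unfold KK pureMat
  rw [← vc_mul, Matrix.mul_vecMulVec, Matrix.vecMulVec_mul, star_mulVec]

lemma KK_apply (A B : M2) (ρ : M4) (i j k l : Fin 2) : KK A B ρ (i, j) (k, l) =
    ∑ a, ∑ b, ∑ c, ∑ d, A i a * B j b * ρ (a, b) (c, d) * star (A k c * B l d) := by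
  simp only [KK, Matrix.mul_apply, Fintype.sum_prod_type, Fin.sum_univ_two, kroneckerMap_apply,
    conjTranspose_apply]
  ring

/-- positive functional -/
def ff (ρ : M4) (A B : M2) : ℝ := (KK A B ρ).trace.re

lemma trace_KK {ρ : M4} (h : ρ.PosSemidef) (A B : M2) : (KK A B ρ).trace = (ff ρ A B : ℂ) := by
  have := (KK_psd A B h).trace_nonneg
  rw [Complex.le_def] at this
  apply Complex.ext
  · simp [ff]
  · simpa using this.2.symm

lemma ff_nonneg {ρ : M4} (h : ρ.PosSemidef) (A B : M2) : 0 ≤ ff ρ A B := by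
  have := (KK_psd A B h).trace_nonneg
  rw [Complex.le_def] at this
  simpa [ff] using this.1

lemma ff_smul (ρ : M4) (A B : M2) (x y : ℝ) :
    ff ρ ((x : ℂ) • A) ((y : ℂ) • B) = x ^ 2 * y ^ 2 * ff ρ A B := by
  have : KK ((x : ℂ) • A) ((y : ℂ) • B) ρ = ((x ^ 2 * y ^ 2 : ℝ) : ℂ) • KK A B ρ := by
    unfold KK
    simp only [smul_kronecker, kronecker_smul, conjTranspose_smul, Matrix.smul_mul, Matrix.mul_smul, smul_smul]
    congr 1
    simp
    ring
  rw [ff, this, trace_smul, smul_eq_mul, Complex.re_ofReal_mul, ff]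

lemma ff_cont (ρ : M4) : Continuous (fun z : (Fin 2 → Fin 2 → ℂ) × (Fin 2 → Fin 2 → ℂ) =>
    ff ρ (Matrix.of z.1) (Matrix.of z.2)) := by
  unfold ff
  simp only [Matrix.trace, Matrix.diag, Fintype.sum_prod_type, KK_apply, Matrix.of_apply]
  fun_prop

lemma exists_max {ρ : M4} (h : ρ.PosSemidef) (hpos : ∀ A B : M2, A ≠ 0 → B ≠ 0 → ff ρ A B ≠ 0) :
    ∃ A0 B0 : M2, A0.det ≠ 0 ∧ B0.det ≠ 0 ∧ ∀ A B : M2,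
      ‖A.det‖ * ‖B.det‖ * ff ρ A0 B0 ≤ ‖A0.det‖ * ‖B0.det‖ * ff ρ A B := by
  have hf : ∀ A B : M2, A ≠ 0 → B ≠ 0 → 0 < ff ρ A B := fun A B hA hB =>
    lt_of_le_of_ne (ff_nonneg h A B) (hpos A B hA hB).symm
  let S : Set (Fin 2 → Fin 2 → ℂ) := Metric.sphere 0 1
  have hS : ∀ a ∈ S, Matrix.of a ≠ 0 := by
    intro a ha h0
    have : a = 0 := h0
    simp [S, this] at ha
  let g : (Fin 2 → Fin 2 → ℂ) × (Fin 2 → Fin 2 → ℂ) → ℝ := fun z =>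
    ‖(Matrix.of z.1).det‖ * ‖(Matrix.of z.2).det‖ / ff ρ (Matrix.of z.1) (Matrix.of z.2)
  have hgc : ContinuousOn g (S ×ˢ S) := by
    apply ContinuousOn.div
    · apply Continuous.continuousOn
      simp only [det_fin_two, Matrix.of_apply]
      fun_prop
    · exact (ff_cont ρ).continuousOn
    · rintro ⟨a, b⟩ ⟨ha, hb⟩
      exact (hf _ _ (hS a ha) (hS b hb)).ne'
  have hcomp : IsCompact (S ×ˢ S) := (isCompact_sphere 0 1).prod (isCompact_sphere 0 1)
  have norm_mem : ∀ A : M2, A ≠ 0 → ∃ (x : ℝ) (a : Fin 2 → Fin 2 → ℂ), x ≠ 0 ∧ a ∈ S ∧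
      A = (x : ℂ) • Matrix.of a := by
    intro A hA
    let a : Fin 2 → Fin 2 → ℂ := A
    have ha : a ≠ 0 := hA
    have hn : ‖a‖ ≠ 0 := norm_ne_zero_iff.2 ha
    refine ⟨‖a‖, (‖a‖⁻¹ : ℝ) • a, hn, ?_, ?_⟩
    · simp only [S, mem_sphere_zero_iff_norm, norm_smul, norm_inv, norm_norm]
      exact inv_mul_cancel₀ hn
    · ext i j
      have : (‖a‖ : ℂ) ≠ 0 := by exact_mod_cast hn
      change a i j = (‖a‖ : ℂ) * ((‖a‖⁻¹ : ℝ) • a) i j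
      simp only [Pi.smul_apply, Complex.real_smul]
      push_cast
      field_simp
  obtain ⟨x1, e, hx1, he, he1⟩ := norm_mem 1 one_ne_zero
  obtain ⟨⟨a0, b0⟩, ⟨ha0, hb0⟩, hmax⟩ := hcomp.exists_isMaxOn ⟨(e, e), he, he⟩ hgc
  have hf0 := hf _ _ (hS a0 ha0) (hS b0 hb0)
  have hdet : (Matrix.of e).det ≠ 0 := by
    intro h0
    have := congrArg Matrix.det he1
    rw [det_smul, h0] at this
    simp at this
  have h1 : 0 < g (a0, b0) := by
    refine lt_of_lt_of_le ?_ (hmax (Set.mk_mem_prod he he))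
    have := hf _ _ (hS e he) (hS e he)
    have := norm_pos_iff.2 hdet
    simp only [g]; positivity
  refine ⟨Matrix.of a0, Matrix.of b0, ?_, ?_, ?_⟩
  · intro h0; simp [g, h0] at h1
  · intro h0; simp [g, h0] at h1
  · intro A B
    by_cases hA : A = 0
    · subst hA; simpa using mul_nonneg (by positivity) (ff_nonneg h _ _)
    by_cases hB : B = 0
    · subst hB; simpa using mul_nonneg (by positivity) (ff_nonneg h _ _)
    obtain ⟨x, a, hx, ha, rfl⟩ := norm_mem A hA
    obtain ⟨y, b, hy, hb, rfl⟩ := norm_mem B hB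
    have := hmax (Set.mk_mem_prod ha hb)
    simp only [g, Set.mem_ofPred_eq] at this
    rw [div_le_div_iff₀ (hf _ _ (hS a ha) (hS b hb)) hf0] at this
    rw [ff_smul, det_smul, det_smul]
    simp only [Fintype.card_fin, norm_mul, norm_pow, Complex.norm_real, Real.norm_eq_abs, sq_abs]
    have h2 := mul_le_mul_of_nonneg_left this (by positivity : 0 ≤ x ^ 2 * y ^ 2)
    linarith

lemma exists_normal {ρ : M4} (h : ρ.PosSemidef)
    (hpos : ∀ A B : M2, A ≠ 0 → B ≠ 0 → ff ρ A B ≠ 0) :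
    ∃ ρ' : M4, LE ρ ρ' ∧ ρ'.PosSemidef ∧ ρ'.trace = 1 ∧
      ∀ A B : M2, ‖A.det‖ * ‖B.det‖ ≤ (KK A B ρ').trace.re := by
  obtain ⟨A0, B0, hA, hB, hmax⟩ := exists_max h hpos
  have hA0 : A0 ≠ 0 := by rintro rfl; simp at hA
  have hB0 : B0 ≠ 0 := by rintro rfl; simp at hB
  have hf : 0 < ff ρ A0 B0 := lt_of_le_of_ne (ff_nonneg h _ _) (hpos _ _ hA0 hB0).symm
  have hle : LE ρ ((((ff ρ A0 B0)⁻¹ : ℝ) : ℂ) • KK A0 B0 ρ) :=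
    ⟨A0, B0, _, hA, hB, inv_pos.2 hf, rfl⟩
  refine ⟨_, hle, hle.psd h, ?_, ?_⟩
  · rw [trace_smul, trace_KK h, smul_eq_mul, ← Complex.ofReal_mul, inv_mul_cancel₀ hf.ne']
    simp
  · intro A B
    rw [KK_smul, KK_comp, trace_smul, smul_eq_mul, Complex.re_ofReal_mul]
    have := hmax (A * A0) (B * B0)
    simp only [det_mul, norm_mul] at this
    change _ ≤ _ * ff ρ (A * A0) (B * B0)
    have h1 := norm_pos_iff.2 hA
    have h2 := norm_pos_iff.2 hB
    rw [inv_mul_eq_div, le_div_iff₀ hf]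
    have h3 : 0 < ‖A0.det‖ * ‖B0.det‖ := by positivity
    refine le_of_mul_le_mul_left ?_ h3
    linarith

lemma marg_lemma (m : M2) (hH : m.IsHermitian) (htr : m 0 0 + m 1 1 = 1)
    (h : ∀ A : M2, ‖A.det‖ ≤ (∑ i, ∑ a, ∑ c, A i a * m a c * star (A i c)).re) :
    m 0 0 = 1 / 2 ∧ m 1 1 = 1 / 2 ∧ m 0 1 = 0 ∧ m 1 0 = 0 := by
  have e00 := hH.apply 0 0
  have e11 := hH.apply 1 1
  have e01 := hH.apply 0 1
  have i00 : (m 0 0).im = 0 := by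
    have := congrArg Complex.im e00; simp at this; linarith
  have i11 : (m 1 1).im = 0 := by
    have := congrArg Complex.im e11; simp at this; linarith
  have tr := congrArg Complex.re htr
  simp at tr
  have key : ∀ s : ℝ, s ≤ (m 0 0).re + s ^ 2 * (m 1 1).re := by
    intro s
    have := h !![1, 0; 0, (s : ℂ)]
    simp [det_fin_two, Fin.sum_univ_two, i11] at this
    have := le_abs_self s
    nlinarith
  have hx : (m 1 1).re ≤ 1 := by have := key 0; linarith
  have hx2 : (m 1 1).re = 1 / 2 := by
    have := key (1 + (1 - 2 * (m 1 1).re) / 2)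
    have h0 : (1 - 2 * (m 1 1).re) ^ 2 ≤ 0 := by nlinarith [sq_nonneg (1 - 2 * (m 1 1).re)]
    nlinarith [sq_nonneg (1 - 2 * (m 1 1).re)]
  have hx0 : (m 0 0).re = 1 / 2 := by linarith
  have r01 := congrArg Complex.re e01
  have j01 := congrArg Complex.im e01
  simp at r01 j01
  have hz : (m 1 0).re ^ 2 + (m 1 0).im ^ 2 ≤ 0 := by
    have := h !![1, -star (m 1 0); 0, 1]
    simp [det_fin_two, Fin.sum_univ_two, i11, hx2, hx0, ← r01, ← j01] at this
    nlinarith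
  have h1 : (m 1 0).re = 0 := by nlinarith [sq_nonneg (m 1 0).re, sq_nonneg (m 1 0).im]
  have h2 : (m 1 0).im = 0 := by nlinarith [sq_nonneg (m 1 0).re, sq_nonneg (m 1 0).im]
  refine ⟨Complex.ext ?_ ?_, Complex.ext ?_ ?_, Complex.ext ?_ ?_, Complex.ext ?_ ?_⟩ <;> simp <;> linarith

lemma margs {ρ : M4} (h : ρ.PosSemidef) (htr : ρ.trace = 1)
    (hm : ∀ A B : M2, ‖A.det‖ * ‖B.det‖ ≤ (KK A B ρ).trace.re) :
    (ρ (0,0) (0,0) + ρ (0,1) (0,1) = 1/2 ∧ ρ (1,0) (1,0) + ρ (1,1) (1,1) = 1/2 ∧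
      ρ (0,0) (1,0) + ρ (0,1) (1,1) = 0) ∧
    (ρ (0,0) (0,0) + ρ (1,0) (1,0) = 1/2 ∧ ρ (0,1) (0,1) + ρ (1,1) (1,1) = 1/2 ∧
      ρ (0,0) (0,1) + ρ (1,0) (1,1) = 0) := by
  have hH := h.isHermitian
  simp [Matrix.trace, Fintype.sum_prod_type, Fin.sum_univ_two] at htr
  constructor
  · have := marg_lemma (Matrix.of fun i k => ρ (i, 0) (k, 0) + ρ (i, 1) (k, 1)) ?_ ?_ ?_
    · simp only [Matrix.of_apply] at this
      exact ⟨this.1, this.2.1, this.2.2.1⟩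
    · ext i j
      simp [hH.apply]
    · simp
      linear_combination htr
    · intro A
      have := hm A 1
      simp only [det_one, norm_one, mul_one] at this
      refine this.trans_eq (congrArg Complex.re ?_)
      simp [Matrix.trace, Fintype.sum_prod_type, Fin.sum_univ_two, KK_apply]
      ring
  · have := marg_lemma (Matrix.of fun i k => ρ (0, i) (0, k) + ρ (1, i) (1, k)) ?_ ?_ ?_
    · simp only [Matrix.of_apply] at this
      exact ⟨this.1, this.2.1, this.2.2.1⟩
    · ext i j
      simp [hH.apply]
    · simp
      linear_combination htr
    · intro A
      have := hm 1 A
      simp only [det_one, norm_one, one_mul] at this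
      refine this.trans_eq (congrArg Complex.re ?_)
      simp [Matrix.trace, Fintype.sum_prod_type, Fin.sum_univ_two, KK_apply]
      ring

def Qm (v : Fin 4 → ℝ) : M2 :=
  !![(v 0 : ℂ) + v 1 * I, v 3 + v 2 * I; -v 3 + v 2 * I, v 0 - v 1 * I]

def qmul (a b : Fin 4 → ℝ) : Fin 4 → ℝ :=
  ![a 0 * b 0 - a 1 * b 1 - a 2 * b 2 - a 3 * b 3,
    a 0 * b 1 + a 1 * b 0 - a 2 * b 3 + a 3 * b 2,
    a 0 * b 2 + a 2 * b 0 + a 1 * b 3 - a 3 * b 1,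
    a 0 * b 3 + a 3 * b 0 - a 1 * b 2 + a 2 * b 1]

def qconj (a : Fin 4 → ℝ) : Fin 4 → ℝ := ![a 0, -a 1, -a 2, -a 3]

def dt (a b : Fin 4 → ℝ) : ℝ := a 0 * b 0 + a 1 * b 1 + a 2 * b 2 + a 3 * b 3

lemma Qm_mul (a b : Fin 4 → ℝ) : Qm (qmul a b) = Qm a * Qm b := by
  ext i j
  fin_cases i <;> fin_cases j <;>
    simp [Qm, qmul, Matrix.mul_apply, Fin.sum_univ_two] <;> ring_nf <;> simp [I_sq] <;> ring

lemma Qm_det (a : Fin 4 → ℝ) : (Qm a).det = (dt a a : ℂ) := by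
  simp [Qm, dt, det_fin_two]; ring_nf; simp [I_sq]; ring

lemma qmul_assoc (a b c : Fin 4 → ℝ) : qmul (qmul a b) c = qmul a (qmul b c) := by
  ext i
  fin_cases i <;> simp [qmul] <;> ring

lemma dt_left (a b c : Fin 4 → ℝ) : dt (qmul a b) (qmul a c) = dt a a * dt b c := by
  simp [qmul, dt]; ring

lemma dt_right (a b c : Fin 4 → ℝ) : dt (qmul b a) (qmul c a) = dt a a * dt b c := by
  simp [qmul, dt]; ring

def Reach (v v' : Fin 4 → Fin 4 → ℝ) : Prop :=
  ∃ a b, dt a a ≠ 0 ∧ dt b b ≠ 0 ∧ ∀ k, v' k = qmul (qmul a (v k)) b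

lemma Reach.trans {v v' v'' : Fin 4 → Fin 4 → ℝ} (h : Reach v v') (h' : Reach v' v'') :
    Reach v v'' := by
  obtain ⟨a, b, ha, hb, h⟩ := h
  obtain ⟨a', b', ha', hb', h'⟩ := h'
  refine ⟨qmul a' a, qmul b b', ?_, ?_, ?_⟩
  · rw [dt_left]; exact mul_ne_zero ha' ha
  · rw [dt_left]; exact mul_ne_zero hb hb'
  · intro k
    rw [h', h]
    simp only [qmul_assoc]

def Fr (v : Fin 4 → Fin 4 → ℝ) : Prop :=
  ∃ N : ℝ, 0 < N ∧ ∀ k l, dt (v k) (v l) = if k = l then N else 0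

lemma dt_nonneg (a : Fin 4 → ℝ) : 0 ≤ dt a a := by
  unfold dt
  nlinarith [sq_nonneg (a 0), sq_nonneg (a 1), sq_nonneg (a 2), sq_nonneg (a 3)]

lemma Reach.fr {v v' : Fin 4 → Fin 4 → ℝ} (h : Reach v v') (hf : Fr v) : Fr v' := by
  obtain ⟨a, b, ha, hb, h⟩ := h
  obtain ⟨N, hN, hf⟩ := hf
  have ha' := lt_of_le_of_ne (dt_nonneg a) ha.symm
  have hb' := lt_of_le_of_ne (dt_nonneg b) hb.symm
  refine ⟨dt b b * (dt a a * N), by positivity, fun k l => ?_⟩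
  rw [h, h, dt_right, dt_left, hf]
  split_ifs <;> simp

lemma fr_A {v : Fin 4 → Fin 4 → ℝ} (hf : Fr v) :
    ∃ v' s, Reach v v' ∧ s ≠ 0 ∧ v' 0 = ![s, 0, 0, 0] := by
  obtain ⟨N, hN, hf⟩ := hf
  have h0 := hf 0 0
  simp only [if_true] at h0
  refine ⟨fun k => qmul (qmul ![1, 0, 0, 0] (v k)) (qconj (v 0)), N,
    ⟨![1, 0, 0, 0], qconj (v 0), by simp [dt], ?_, fun k => rfl⟩, hN.ne', ?_⟩
  · have : dt (qconj (v 0)) (qconj (v 0)) = dt (v 0) (v 0) := by simp [dt, qconj]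
    rw [this, h0]; exact hN.ne'
  · rw [← h0]
    ext i
    fin_cases i <;> simp [qmul, qconj, dt] <;> ring

lemma fr_B {v : Fin 4 → Fin 4 → ℝ} (hf : Fr v) {s : ℝ} (hs : s ≠ 0) (h0 : v 0 = ![s, 0, 0, 0]) :
    ∃ v' s t, Reach v v' ∧ s ≠ 0 ∧ t ≠ 0 ∧ v' 0 = ![s, 0, 0, 0] ∧ v' 1 = ![0, t, 0, 0] := by
  obtain ⟨N, hN, hf⟩ := hf
  have h01 := hf 0 1
  have h11 := hf 1 1
  simp [h0, dt, hs] at h01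
  simp [dt, h01] at h11
  set R := Real.sqrt N with hR
  have hR2 : R ^ 2 = N := Real.sq_sqrt hN.le
  have hR0 : 0 < R := Real.sqrt_pos.2 hN
  by_cases hx : R + v 1 1 = 0
  · have hx' : v 1 1 = -R := by linarith
    rw [hx'] at h11
    have h2 : v 1 2 = 0 := by nlinarith [sq_nonneg (v 1 2), sq_nonneg (v 1 3)]
    have h3 : v 1 3 = 0 := by nlinarith [sq_nonneg (v 1 2), sq_nonneg (v 1 3)]
    refine ⟨v, s, -R, ⟨![1, 0, 0, 0], ![1, 0, 0, 0], by simp [dt], by simp [dt], ?_⟩, hs,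
      by simpa using hR0.ne', h0, ?_⟩
    · intro k; ext i; fin_cases i <;> simp [qmul]
    · ext i; fin_cases i <;> simp [h01, hx', h2, h3]
  · set a : Fin 4 → ℝ := ![R + v 1 1, 0, -v 1 3, v 1 2] with ha
    have hap : 0 < dt a a := by
      have : 0 < (R + v 1 1) ^ 2 := by positivity
      simp [dt, ha]
      nlinarith [sq_nonneg (v 1 2), sq_nonneg (v 1 3)]
    have hc : dt (qconj a) (qconj a) = dt a a := by simp [dt, qconj]
    refine ⟨fun k => qmul (qmul a (v k)) (qconj a), dt a a * s, dt a a * R,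
      ⟨a, qconj a, hap.ne', by rw [hc]; exact hap.ne', fun k => rfl⟩, mul_ne_zero hap.ne' hs,
      mul_ne_zero hap.ne' hR0.ne', ?_, ?_⟩
    · ext i; fin_cases i <;> simp [qmul, qconj, ha, h0, dt] <;> ring
    · have e : v 1 1 ^ 2 + v 1 2 ^ 2 + v 1 3 ^ 2 - R ^ 2 = 0 := by linarith
      ext i; fin_cases i <;> simp [qmul, qconj, ha, h01, dt]
      · ring
      · linear_combination (v 1 1 + R) * e
      · linear_combination -(v 1 2) * e
      · linear_combination -(v 1 3) * e

lemma fr_C {v : Fin 4 → Fin 4 → ℝ} (hf : Fr v) {s t : ℝ} (hs : s ≠ 0) (ht : t ≠ 0)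
    (h0 : v 0 = ![s, 0, 0, 0]) (h1 : v 1 = ![0, t, 0, 0]) :
    ∃ v' s t u, Reach v v' ∧ s ≠ 0 ∧ t ≠ 0 ∧ u ≠ 0 ∧ v' 0 = ![s, 0, 0, 0] ∧ v' 1 = ![0, t, 0, 0] ∧
      v' 2 = ![0, 0, u, 0] := by
  obtain ⟨N, hN, hf⟩ := hf
  have h02 := hf 0 2
  have h12 := hf 1 2
  have h22 := hf 2 2
  simp [h0, dt, hs] at h02
  simp [h1, dt, ht] at h12
  simp [dt, h02, h12] at h22
  set R := Real.sqrt N with hR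
  have hR2 : R ^ 2 = N := Real.sq_sqrt hN.le
  have hR0 : 0 < R := Real.sqrt_pos.2 hN
  by_cases hx : R + v 2 2 = 0
  · have hx' : v 2 2 = -R := by linarith
    rw [hx'] at h22
    have h3 : v 2 3 = 0 := by nlinarith [sq_nonneg (v 2 3)]
    refine ⟨v, s, t, -R, ⟨![1, 0, 0, 0], ![1, 0, 0, 0], by simp [dt], by simp [dt], ?_⟩, hs, ht,
      by simpa using hR0.ne', h0, h1, ?_⟩
    · intro k; ext i; fin_cases i <;> simp [qmul]
    · ext i; fin_cases i <;> simp [h02, h12, hx', h3]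
  · set a : Fin 4 → ℝ := ![R + v 2 2, v 2 3, 0, 0] with ha
    have hap : 0 < dt a a := by
      have : 0 < (R + v 2 2) ^ 2 := by positivity
      simp [dt, ha]
      nlinarith [sq_nonneg (v 2 3)]
    have hc : dt (qconj a) (qconj a) = dt a a := by simp [dt, qconj]
    refine ⟨fun k => qmul (qmul a (v k)) (qconj a), dt a a * s, dt a a * t, dt a a * R,
      ⟨a, qconj a, hap.ne', by rw [hc]; exact hap.ne', fun k => rfl⟩, mul_ne_zero hap.ne' hs,
      mul_ne_zero hap.ne' ht, mul_ne_zero hap.ne' hR0.ne', ?_, ?_, ?_⟩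
    · ext i; fin_cases i <;> simp [qmul, qconj, ha, h0, dt] <;> ring
    · ext i; fin_cases i <;> simp [qmul, qconj, ha, h1, dt] <;> ring
    · have e : v 2 2 ^ 2 + v 2 3 ^ 2 - R ^ 2 = 0 := by linarith
      ext i; fin_cases i <;> simp [qmul, qconj, ha, h02, h12, dt]
      · linear_combination (v 2 2 + R) * e
      · linear_combination -(v 2 3) * e

lemma fr_main {v : Fin 4 → Fin 4 → ℝ} (hf : Fr v) : ∃ v', ∃ t : Fin 4 → ℝ, ∃ N : ℝ, Reach v v' ∧ 0 < N ∧
    (∀ k, t k ^ 2 = N) ∧ ∀ k, v' k = t k • (Pi.single k 1 : Fin 4 → ℝ) := by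
  obtain ⟨v1, s, r1, hs, e1⟩ := fr_A hf
  obtain ⟨v2, s, t, r2, hs, ht, e0, e1⟩ := fr_B (r1.fr hf) hs e1
  have r12 := r1.trans r2
  obtain ⟨v3, s, t, u, r3, hs, ht, hu, e0, e1, e2⟩ := fr_C (r12.fr hf) hs ht e0 e1
  have r := r12.trans r3
  obtain ⟨N, hN, h⟩ := r.fr hf
  have h03 := h 0 3
  have h13 := h 1 3
  have h23 := h 2 3
  have h33 := h 3 3
  simp [dt, e0, hs] at h03
  simp [dt, e1, ht] at h13
  simp [dt, e2, hu] at h23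
  have h00 := h 0 0
  have h11 := h 1 1
  have h22 := h 2 2
  simp [dt, e0] at h00
  simp [dt, e1] at h11
  simp [dt, e2] at h22
  simp [dt, h03, h13, h23] at h33
  refine ⟨v3, ![s, t, u, v3 3 3], N, r, hN, ?_, ?_⟩
  · intro k; fin_cases k <;> simp <;> linarith
  · intro k
    fin_cases k <;> ext i <;> fin_cases i <;> simp [e0, e1, e2, h03, h13, h23]

lemma bellProj_eq (k : Fin 4) :
    BellProj k = (1 / 2 : ℂ) • pureMat (vc (Qm (Pi.single k 1))) := by
  have h : invSqrt2 * (starRingEnd ℂ) invSqrt2 = 1 / 2 := by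
    unfold invSqrt2
    rw [Complex.conj_ofReal, ← Complex.ofReal_mul, ← mul_inv, Real.mul_self_sqrt (by norm_num)]
    norm_num
  ext ⟨i, j⟩ ⟨i', j'⟩
  fin_cases k <;> fin_cases i <;> fin_cases j <;> fin_cases i' <;> fin_cases j' <;>
    simp [BellProj, bell, pureMat, vc, Qm, vecMulVec_apply, h]

lemma rhoBD_00 (l : Fin 4 → ℝ) : rhoBD l = Matrix.of fun p q => 
   (1 / 2 : ℂ) * !![(l 0 + l 1 : ℂ), 0, 0, l 0 - l 1; 0, l 2 + l 3, l 2 - l 3, 0; 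
     0, l 2 - l 3, l 2 + l 3, 0; l 0 - l 1, 0, 0, l 0 + l 1] (idx4 p) (idx4 q) := by
  unfold rhoBD
  simp only [bellProj_eq, Fin.sum_univ_four]
  ext ⟨i, j⟩ ⟨i', j'⟩
  fin_cases i <;> fin_cases j <;> fin_cases i' <;> fin_cases j' <;>
    simp [pureMat, vc, Qm, vecMulVec_apply, idx4] <;> ring

lemma rhoBD_trace (l : Fin 4 → ℝ) : (rhoBD l).trace = ((∑ i, l i : ℝ) : ℂ) := by
  rw [rhoBD_00]
  simp [Matrix.trace, Fintype.sum_prod_type, Fin.sum_univ_two, Fin.sum_univ_four, idx4]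
  ring

lemma rhoBD_nonneg {l : Fin 4 → ℝ} (h : (rhoBD l).PosSemidef) (i : Fin 4) : 0 ≤ l i := by
  have := h.dotProduct_mulVec_nonneg (vc (Qm (Pi.single i 1)))
  rw [Complex.le_def] at this
  have := this.1
  rw [rhoBD_00] at this
  fin_cases i <;>
  simp [vc, Qm, mulVec, dotProduct, Fintype.sum_prod_type, Fin.sum_univ_two, idx4] at this ⊢ <;>
  linarith

lemma fin_BD {ρ : M4} (hρ : IsDensity ρ) {l : Fin 4 → ℝ} (hl : IsOrdered l) (h : LE ρ (rhoBD l)) :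
    ∃ l : Fin 4 → ℝ, IsWeight l ∧ IsOrdered l ∧ SLOCCequiv ρ (rhoBD l) := by
  have hpsd := h.psd hρ.1
  have hn := rhoBD_nonneg hpsd
  have hne : rhoBD l ≠ 0 := h.ne_zero (by rintro rfl; simpa using hρ.2)
  have hs : 0 < ∑ i, l i := by
    refine lt_of_le_of_ne (Finset.sum_nonneg fun i _ => hn i) fun h0 => hne ?_
    rw [← hpsd.trace_eq_zero_iff, rhoBD_trace, ← h0]; simp
  refine ⟨fun i => (∑ i, l i)⁻¹ * l i, ⟨fun i => mul_nonneg (inv_pos.2 hs).le (hn i), ?_⟩, ?_, ?_⟩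
  · rw [← Finset.mul_sum, inv_mul_cancel₀ hs.ne']
  · have := (inv_pos.2 hs).le
    exact ⟨mul_le_mul_of_nonneg_left hl.1 this, mul_le_mul_of_nonneg_left hl.2.1 this,
      mul_le_mul_of_nonneg_left hl.2.2 this⟩
  · refine (h.trans ⟨1, 1, (∑ i, l i)⁻¹, by simp, by simp, inv_pos.2 hs, ?_⟩).equiv
    rw [KK_one]
    unfold rhoBD
    rw [Finset.smul_sum]
    simp only [smul_smul, Complex.ofReal_mul]

lemma spectral4 (S : Matrix (Fin 4) (Fin 4) ℝ) (hS : S.IsHermitian) :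
    ∃ (μ : Fin 4 → ℝ) (v : Fin 4 → Fin 4 → ℝ), IsOrdered μ ∧ Fr v ∧
      ∀ i j, S i j = ∑ k, μ k * (v k i * v k j) := by
  let U : Matrix (Fin 4) (Fin 4) ℝ := hS.eigenvectorUnitary
  have hU : star U * U = 1 := Unitary.coe_star_mul_self hS.eigenvectorUnitary
  let σ := Tuple.sort (fun i => - hS.eigenvalues i)
  have hσ : Monotone ((fun i => - hS.eigenvalues i) ∘ σ) := Tuple.monotone_sort _
  refine ⟨fun k => hS.eigenvalues (σ k), fun k i => U i (σ k), ?_, ?_, ?_⟩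
  · have h : ∀ i j : Fin 4, i ≤ j → hS.eigenvalues (σ j) ≤ hS.eigenvalues (σ i) := by
      intro i j hij
      have := hσ hij
      simpa using this
    exact ⟨h _ _ (by decide), h _ _ (by decide), h _ _ (by decide)⟩
  · refine ⟨1, one_pos, fun k l => ?_⟩
    have := congrFun (congrFun hU (σ k)) (σ l)
    simp [Matrix.mul_apply, Fin.sum_univ_four, Matrix.one_apply, star_apply] at this
    simpa [dt] using this
  · intro i j
    have h := hS.spectral_theorem
    rw [Unitary.conjStarAlgAut_apply] at h
    have h2 := congrFun (congrFun h i) j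
    rw [h2, Matrix.mul_apply]
    rw [← Equiv.sum_comp σ]
    refine Finset.sum_congr rfl fun k _ => ?_
    rw [Matrix.mul_diagonal]
    simp [U, star_apply]
    ring

def Smat (ρ : M4) : Matrix (Fin 4) (Fin 4) ℝ :=
  let a := (ρ (0,0) (0,0)).re
  let d := (ρ (0,1) (0,1)).re
  let x := ρ (0,0) (0,1)
  let y := ρ (0,0) (1,0)
  let z := ρ (0,0) (1,1)
  let w := ρ (0,1) (1,0)
  !![(a + z.re) / 2, z.im / 2, -(x + y).im / 2, (x - y).re / 2;
     z.im / 2, (a - z.re) / 2, (x + y).re / 2, (x - y).im / 2;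
     -(x + y).im / 2, (x + y).re / 2, (d + w.re) / 2, -w.im / 2;
     (x - y).re / 2, (x - y).im / 2, -w.im / 2, (d - w.re) / 2]

lemma Smat_herm (ρ : M4) : (Smat ρ).IsHermitian := by
  ext i j
  fin_cases i <;> fin_cases j <;> simp [Smat]

lemma Smat_eq {ρ : M4} (h : ρ.IsHermitian)
    (hm : (ρ (0,0) (0,0) + ρ (0,1) (0,1) = 1/2 ∧ ρ (1,0) (1,0) + ρ (1,1) (1,1) = 1/2 ∧
      ρ (0,0) (1,0) + ρ (0,1) (1,1) = 0) ∧
    (ρ (0,0) (0,0) + ρ (1,0) (1,0) = 1/2 ∧ ρ (0,1) (0,1) + ρ (1,1) (1,1) = 1/2 ∧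
      ρ (0,0) (0,1) + ρ (1,0) (1,1) = 0)) (p q : Q2) :
    ρ p q = ∑ i, ∑ j, (Smat ρ i j : ℂ) * (vc (Qm (Pi.single i 1)) p * star (vc (Qm (Pi.single j 1)) q)) := by
  obtain ⟨⟨h1, h2, h3⟩, h4, h5, h6⟩ := hm
  have r11 : ρ (1,1) (1,1) = ρ (0,0) (0,0) := by linear_combination h5 - h1
  have r10 : ρ (1,0) (1,0) = ρ (0,1) (0,1) := by linear_combination h4 - h1
  have r3 : ρ (0,1) (1,1) = - ρ (0,0) (1,0) := by linear_combination h3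
  have r6 : ρ (1,0) (1,1) = - ρ (0,0) (0,1) := by linear_combination h6
  have a1 := h.apply (1,1) (0,1)
  have a2 := h.apply (1,1) (1,0)
  have a3 := h.apply (1,1) (0,0)
  have a4 := h.apply (1,0) (0,1)
  have a5 := h.apply (1,0) (0,0)
  have a6 := h.apply (0,1) (0,0)
  have i0 : (ρ (0,0) (0,0)).im = 0 := by
    have := congrArg Complex.im (h.apply (0,0) (0,0)); simp at this; linarith
  have i1 : (ρ (0,1) (0,1)).im = 0 := by
    have := congrArg Complex.im (h.apply (0,1) (0,1)); simp at this; linarith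
  obtain ⟨i, j⟩ := p
  obtain ⟨k, l⟩ := q
  fin_cases i <;> fin_cases j <;> fin_cases k <;> fin_cases l <;>
  simp only [Fin.zero_eta, Fin.mk_one, Fin.isValue, r11, r10, r3, r6, ← a1, ← a2, ← a3, ← a4, ← a5, ← a6] <;>
  apply Complex.ext <;>
  simp [Fin.sum_univ_four, Smat, vc, Qm, i0, i1] <;> ring

lemma Qm_lin (v : Fin 4 → ℝ) (p : Q2) :
    vc (Qm v) p = ∑ i, (v i : ℂ) * vc (Qm (Pi.single i 1)) p := by
  obtain ⟨i, j⟩ := p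
  fin_cases i <;> fin_cases j <;> simp [vc, Qm, Fin.sum_univ_four] <;> ring

lemma Qm_smul (t : ℝ) (v : Fin 4 → ℝ) : vc (Qm (t • v)) = (t : ℂ) • vc (Qm v) := by
  ext ⟨i, j⟩
  fin_cases i <;> fin_cases j <;> simp [vc, Qm] <;> ring

lemma BD_of_marg {ρ : M4} (h : ρ.IsHermitian)
    (hm : (ρ (0,0) (0,0) + ρ (0,1) (0,1) = 1/2 ∧ ρ (1,0) (1,0) + ρ (1,1) (1,1) = 1/2 ∧
      ρ (0,0) (1,0) + ρ (0,1) (1,1) = 0) ∧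
    (ρ (0,0) (0,0) + ρ (1,0) (1,0) = 1/2 ∧ ρ (0,1) (0,1) + ρ (1,1) (1,1) = 1/2 ∧
      ρ (0,0) (0,1) + ρ (1,0) (1,1) = 0)) :
    ∃ l, IsOrdered l ∧ LE ρ (rhoBD l) := by
  obtain ⟨μ, v, hμ, hv, hS⟩ := spectral4 _ (Smat_herm ρ)
  obtain ⟨v', t, N, ⟨a, b, ha, hb, hr⟩, hN, ht, hv'⟩ := fr_main hv
  have e1 : ρ = ∑ k, (μ k : ℂ) • pureMat (vc (Qm (v k))) := by
    ext p q
    rw [Smat_eq h hm]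
    simp only [hS]
    rw [Matrix.sum_apply]
    simp only [Matrix.smul_apply, pureMat, vecMulVec_apply, Pi.star_apply, Qm_lin (v _), star_sum,
      Finset.sum_mul_sum, smul_eq_mul]
    push_cast
    simp only [Finset.mul_sum, Finset.sum_mul]
    rw [Finset.sum_comm' (t' := Finset.univ) (s' := fun _ => Finset.univ) (by simp)]
    conv_rhs => rw [Finset.sum_comm]
    conv_lhs => rw [Finset.sum_comm]
    refine Finset.sum_congr rfl fun i _ => ?_
    conv_rhs => rw [Finset.sum_comm]
    refine Finset.sum_congr rfl fun j _ => ?_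
    refine Finset.sum_congr rfl fun k _ => ?_
    simp
    ring
  refine ⟨μ, hμ, Qm a, (Qm b)ᵀ, 1 / (2 * N), ?_, ?_, by positivity, ?_⟩
  · rw [Qm_det]; exact_mod_cast ha
  · rw [det_transpose, Qm_det]; exact_mod_cast hb
  · have hN' : (N : ℂ) ≠ 0 := by exact_mod_cast hN.ne'
    rw [e1, KK_sum, Finset.smul_sum]
    unfold rhoBD
    refine Finset.sum_congr rfl fun k _ => ?_
    rw [KK_smul, KK_pure, transpose_transpose, ← Qm_mul, ← Qm_mul, ← hr, hv', bellProj_eq,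
      Qm_smul]
    have : pureMat ((t k : ℂ) • vc (Qm (Pi.single k 1))) = (N : ℂ) • pureMat (vc (Qm (Pi.single k 1))) := by
      ext p q
      simp [pureMat, vecMulVec_apply, ← ht k]
      ring
    rw [this, smul_smul, smul_smul, smul_smul]
    congr 1
    push_cast
    field_simp

lemma row_ext (x : Fin 2 → ℂ) (hx : x ≠ 0) : ∃ A : M2, A.det ≠ 0 ∧ A 1 = x := by
  by_cases h : x 1 = 0
  · refine ⟨!![0, 1; x 0, x 1], ?_, ?_⟩
    · simp [det_fin_two]
      intro h0; apply hx; ext i; fin_cases i <;> simp [h, h0]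
    · ext i; fin_cases i <;> simp
  · refine ⟨!![1, 0; x 0, x 1], by simpa [det_fin_two] using h, ?_⟩
    ext i; fin_cases i <;> simp

/-- step K1: reach zero corner -/
lemma exists_corner {ρ : M4} (h : ρ.PosSemidef) {A B : M2} (hA : A ≠ 0) (hB : B ≠ 0)
    (hf : ff ρ A B = 0) : ∃ ρ', LE ρ ρ' ∧ ρ' (1,1) (1,1) = 0 := by
  have h0 : KK A B ρ = 0 := by
    rw [← (KK_psd A B h).trace_eq_zero_iff, trace_KK h, hf]; simp
  obtain ⟨i, hi⟩ : ∃ i, A i ≠ 0 := Function.ne_iff.1 hA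
  obtain ⟨j, hj⟩ : ∃ j, B j ≠ 0 := Function.ne_iff.1 hB
  obtain ⟨A', hA', eA⟩ := row_ext _ hi
  obtain ⟨B', hB', eB⟩ := row_ext _ hj
  refine ⟨_, ⟨A', B', 1, hA', hB', one_pos, rfl⟩, ?_⟩
  have := congrFun (congrFun h0 (i, j)) (i, j)
  rw [KK_apply, ← eA, ← eB] at this
  simp only [Complex.ofReal_one, one_smul, KK_apply]
  exact this

lemma gram {ρ : M4} (h : ρ.PosSemidef) : ∃ c : Q2 → EuclideanSpace ℂ Q2,
    ∀ p q, ρ p q = inner ℂ (c p) (c q) := by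
  obtain ⟨C, rfl⟩ : ∃ C : M4, ρ = Cᴴ * C := by
    open scoped MatrixOrder Matrix.Norms.L2Operator in
    exact CStarAlgebra.nonneg_iff_eq_star_mul_self.1 h.nonneg
  refine ⟨fun p => WithLp.toLp 2 fun k => C k p, fun p q => ?_⟩
  simp [Matrix.mul_apply, PiLp.inner_apply, mul_comm]

lemma exists_X {ρ : M4} (h : ρ.PosSemidef) (h11 : ρ (1,1) (1,1) = 0) :
    ∃ (p q r : ℝ) (d : ℂ), 0 ≤ p ∧ 0 ≤ q ∧ 0 ≤ r ∧ ‖d‖ ^ 2 ≤ q * r ∧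
      LE ρ (Matrix.of fun x y => !![(p : ℂ), 0, 0, 0; 0, q, d, 0; 0, star d, r, 0; 0, 0, 0, 0] (idx4 x) (idx4 y)) := by
  obtain ⟨c, hc⟩ := gram h
  have c11 : c (1,1) = 0 := by
    rw [hc] at h11; exact inner_self_eq_zero.1 h11
  obtain ⟨y, hy, z, hz, hyz⟩ := (Submodule.span ℂ {c (0,1), c (1,0)}).exists_add_mem_mem_orthogonal (c (0,0))
  obtain ⟨β, α, rfl⟩ := Submodule.mem_span_pair.1 hy
  have z1 : inner ℂ (c (0,1)) z = 0 := hz _ (Submodule.subset_span (by simp))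
  have z2 : inner ℂ (c (1,0)) z = 0 := hz _ (Submodule.subset_span (by simp))
  have z1' : inner ℂ z (c (0,1)) = 0 := inner_eq_zero_symm.1 z1
  have z2' : inner ℂ z (c (1,0)) = 0 := inner_eq_zero_symm.1 z2
  have hself : ∀ x : EuclideanSpace ℂ Q2, inner ℂ x x = ((‖x‖ ^ 2 : ℝ) : ℂ) := by
    intro x; rw [inner_self_eq_norm_sq_to_K]; simp
  refine ⟨‖z‖ ^ 2, ‖c (0,1)‖ ^ 2, ‖c (1,0)‖ ^ 2, inner ℂ (c (0,1)) (c (1,0)), by positivity,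
    by positivity, by positivity, ?_, !![1, -star α; 0, 1], !![1, -star β; 0, 1], 1, by simp [det_fin_two],
    by simp [det_fin_two], one_pos, ?_⟩
  · rw [← mul_pow]
    exact pow_le_pow_left₀ (norm_nonneg _) (norm_inner_le_norm _ _) 2
  · ext ⟨i, j⟩ ⟨k, l⟩
    rw [Complex.ofReal_one, one_smul, KK_apply]
    simp only [hc, ← hself]
    fin_cases i <;> fin_cases j <;> fin_cases k <;> fin_cases l <;>
    simp [idx4, Fin.sum_univ_two, hyz, c11, inner_add_left, inner_add_right, inner_smul_left, inner_smul_right, z1, z2, z1', z2'] <;> ring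

lemma fin_sep {ρ : M4} (hρ : IsDensity ρ) {σ : M4} (h : LE ρ σ) {p q r : ℝ} (hp : 0 ≤ p) (hq : 0 ≤ q)
    (hr : 0 ≤ r)
    (e : σ = Matrix.of fun x y => !![(p : ℂ), 0, 0, 0; 0, q, 0, 0; 0, 0, r, 0; 0, 0, 0, 0] (idx4 x) (idx4 y)) :
    (∃ σ : M4, IsDensity σ ∧ Sep2 σ ∧ SLOCCequiv ρ σ) := by
  have hne := h.ne_zero (by rintro rfl; simpa using hρ.2)
  have htr : σ.trace = ((p + q + r : ℝ) : ℂ) := by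
    simp [e, Matrix.trace, Fintype.sum_prod_type, Fin.sum_univ_two, idx4]
  have hs : 0 < p + q + r := by
    refine lt_of_le_of_ne (by positivity) fun h0 => hne ?_
    rw [← (h.psd hρ.1).trace_eq_zero_iff, htr, ← h0]; simp
  set s := p + q + r with hsd
  have h2 : LE σ (((s⁻¹ : ℝ) : ℂ) • σ) :=
    ⟨1, 1, s⁻¹, by simp, by simp, inv_pos.2 hs, by rw [KK_one]⟩
  refine ⟨_, ⟨(h.trans h2).psd hρ.1, ?_⟩, ?_, (h.trans h2).equiv⟩
  · rw [trace_smul, htr, smul_eq_mul, ← Complex.ofReal_mul, inv_mul_cancel₀ hs.ne']; simp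
  · have hsq : ∀ x : ℝ, 0 ≤ x → ((Real.sqrt x : ℝ) : ℂ) * (Real.sqrt x : ℝ) = x := by
      intro x hx; rw [← Complex.ofReal_mul, Real.mul_self_sqrt hx]
    have hi := (inv_pos.2 hs).le
    refine ⟨3, ![![(Real.sqrt (s⁻¹ * p) : ℝ), 0], ![(Real.sqrt (s⁻¹ * q) : ℝ), 0], ![0, (Real.sqrt (s⁻¹ * r) : ℝ)]],
      ![![1, 0], ![0, 1], ![1, 0]], ?_⟩
    rw [e]
    ext ⟨i, j⟩ ⟨k, l⟩
    simp only [Matrix.smul_apply, Matrix.sum_apply, Fin.sum_univ_three, kroneckerMap_apply, pureMat,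
      vecMulVec_apply, Pi.star_apply]
    fin_cases i <;> fin_cases j <;> fin_cases k <;> fin_cases l <;>
    simp [idx4, -Complex.ofReal_mul, -Real.sqrt_mul, -Real.sqrt_mul',
      hsq _ (mul_nonneg hi hp), hsq _ (mul_nonneg hi hq), hsq _ (mul_nonneg hi hr)] <;> push_cast <;> rfl

lemma phase (d : ℂ) (hd : d ≠ 0) : ∃ u : ℂ, u ≠ 0 ∧ u * star u = 1 ∧ u * d = ‖d‖ := by
  have hn : (‖d‖ : ℂ) ≠ 0 := by exact_mod_cast norm_ne_zero_iff.2 hd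
  have hs : d * star d = (‖d‖ : ℂ) ^ 2 := by
    rw [star_def, Complex.mul_conj, Complex.normSq_eq_norm_sq]; push_cast; rfl
  have hs' : star (‖d‖ : ℂ) = ‖d‖ := by simp
  refine ⟨star d / ‖d‖, div_ne_zero (star_ne_zero.2 hd) hn, ?_, ?_⟩
  · rw [star_div₀, star_star, hs']
    field_simp
    linear_combination hs
  · field_simp
    linear_combination hs

lemma final_X {ρ : M4} (hρ : IsDensity ρ) {p q r : ℝ} {d : ℂ} (hp : 0 ≤ p) (hq : 0 ≤ q)
    (hr : 0 ≤ r) (hd : ‖d‖ ^ 2 ≤ q * r)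
    (h : LE ρ (Matrix.of fun x y => !![(p : ℂ), 0, 0, 0; 0, q, d, 0; 0, star d, r, 0; 0, 0, 0, 0] (idx4 x) (idx4 y))) :
    (∃ l : Fin 4 → ℝ, IsWeight l ∧ IsOrdered l ∧ SLOCCequiv ρ (rhoBD l)) ∨
    (∃ σ : M4, IsDensity σ ∧ Sep2 σ ∧ SLOCCequiv ρ σ) ∨
    (∃ b : ℝ, 0 < b ∧ b ≤ 1 / 2 ∧ SLOCCequiv ρ (rhoND b)) := by
  by_cases hd0 : d = 0
  · subst hd0
    exact Or.inr (Or.inl (fin_sep hρ h hp hq hr (by simp)))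
  have hdn : 0 < ‖d‖ := norm_pos_iff.2 hd0
  have hqr : 0 < q * r := lt_of_lt_of_le (by positivity) hd
  have hq' : 0 < q := lt_of_le_of_ne hq (by rintro rfl; simp at hqr)
  have hr' : 0 < r := lt_of_le_of_ne hr (by rintro rfl; simp at hqr)
  obtain ⟨u, hu, hu1, hud⟩ := phase d hd0
  set f := Real.sqrt q with hf
  set g := Real.sqrt r with hg
  have f2 : f ^ 2 = q := Real.sq_sqrt hq
  have g2 : g ^ 2 = r := Real.sq_sqrt hr
  have f0 : 0 < f := Real.sqrt_pos.2 hq'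
  have g0 : 0 < g := Real.sqrt_pos.2 hr'
  have hle : ‖d‖ ≤ f * g := by
    refine le_of_sq_le_sq ?_ (by positivity)
    rw [mul_pow, f2, g2]; exact hd
  have fc : (f : ℂ) ≠ 0 := by exact_mod_cast f0.ne'
  have gc : (g : ℂ) ≠ 0 := by exact_mod_cast g0.ne'
  have hud' : star u * star d = ‖d‖ := by
    rw [← star_mul', hud]; simp
  simp only [star_def] at hu1 hud'
  rw [← f2, ← g2] at h
  rcases hp.eq_or_lt with rfl | hp'
  · left
    refine fin_BD hρ (l := ![f * g + ‖d‖, f * g - ‖d‖, 0, 0]) ⟨?_, ?_, ?_⟩ (h.trans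
      ⟨!![u * g, 0; 0, 1], !![0, 1; (f : ℂ), 0], 1 / (f * g), ?_, ?_, by positivity, ?_⟩)
    · simp; linarith
    · simp; linarith
    · simp
    · simp [det_fin_two, hu, gc]
    · simp [det_fin_two, fc]
    · rw [rhoBD_00]
      ext ⟨i, j⟩ ⟨k, l⟩
      rw [Matrix.smul_apply, KK_apply]
      fin_cases i <;> fin_cases j <;> fin_cases k <;> fin_cases l <;>
      simp [idx4, Fin.sum_univ_two]
      · field_simp
        linear_combination (-2 : ℂ) * hu1
      · field_simp
        linear_combination (-2 : ℂ) * hud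
      · field_simp
        linear_combination (-2 : ℂ) * hud'
      · field_simp
        ring
  · right; right
    have pc : (p : ℂ) ≠ 0 := by exact_mod_cast hp'.ne'
    set m := Real.sqrt (2 / p) with hm
    have m0 : 0 < m := Real.sqrt_pos.2 (by positivity)
    have m2 : m ^ 2 = 2 / p := Real.sq_sqrt (by positivity)
    have mc : (m : ℂ) ≠ 0 := by exact_mod_cast m0.ne'
    have m2c : (m : ℂ) ^ 2 * p = 2 := by
      have : m ^ 2 * p = 2 := by rw [m2]; field_simp
      exact_mod_cast this
    refine ⟨‖d‖ / (2 * (f * g)), by positivity, ?_, (h.trans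
      ⟨!![u * g * m, 0; 0, 1], !![f * m, 0; 0, 1], 1 / (4 * (f * g * m) ^ 2), ?_, ?_, by positivity, ?_⟩).equiv⟩
    · rw [div_le_div_iff₀ (by positivity) (by positivity)]; linarith
    · simp [det_fin_two, hu, gc, mc]
    · simp [det_fin_two, fc, mc]
    · ext ⟨i, j⟩ ⟨k, l⟩
      rw [Matrix.smul_apply, KK_apply]
      fin_cases i <;> fin_cases j <;> fin_cases k <;> fin_cases l <;>
      simp [idx4, Fin.sum_univ_two, rhoND]
      · field_simp
        linear_combination (-2 : ℂ) * hu1 - u * (starRingEnd ℂ) u * m2c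
      · field_simp
        linear_combination -hu1
      · field_simp
        linear_combination -hud
      · field_simp
        linear_combination -hud'
      · field_simp
/-- every two-qubit density matrix is SLOCC equivalent to (1) an
ordered Bell-diagonal state, (2) a separable density matrix, or (3) `ρ_ND(b)` for
some `0 < b ≤ 1/2`. -/
theorem stmt15 (ρ : M4) (hρ : IsDensity ρ) :
    (∃ l : Fin 4 → ℝ, IsWeight l ∧ IsOrdered l ∧ SLOCCequiv ρ (rhoBD l)) ∨
    (∃ σ : M4, IsDensity σ ∧ Sep2 σ ∧ SLOCCequiv ρ σ) ∨
    (∃ b : ℝ, 0 < b ∧ b ≤ 1 / 2 ∧ SLOCCequiv ρ (rhoND b)) := by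
  by_cases hpos : ∀ A B : M2, A ≠ 0 → B ≠ 0 → ff ρ A B ≠ 0
  · left
    obtain ⟨ρ', hle, hpsd, htr, hm⟩ := exists_normal hρ.1 hpos
    obtain ⟨l, hl, h⟩ := BD_of_marg hpsd.isHermitian (margs hpsd htr hm)
    exact fin_BD hρ hl (hle.trans h)
  · push Not at hpos
    obtain ⟨A, B, hA, hB, hf⟩ := hpos
    obtain ⟨ρ', hle, h11⟩ := exists_corner hρ.1 hA hB hf
    obtain ⟨p, q, r, d, hp, hq, hr, hd, h⟩ := exists_X (hle.psd hρ.1) h11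
    exact final_X hρ hp hq hr hd (hle.trans h)

end Paper
end
end

section
/- Fix 0 < b ≤ 1/2 and set ρ_ND = (1/4)·[[2,0,0,0],[0,1,2b,0],[0,2b,1,0],[0,0,0,0]] and ρ'_ND = (1/2)·[[0,0,0,0],[0,1,−2b,0],[0,−2b,1,0],[0,0,0,0]] (both in the product basis |00⟩,|01⟩,|10⟩,|11⟩). Define the 2×2 matrices A_1 = [[−2b+√(1+4b²), −1/2],[1,0]], B_1 = [[1,1/2],[1,0]], A_2 = [[2b−√(1+4b²), 1/2],[1,0]], B_2 = [[1,1/2],[−1,0]]. Then there exists a real c > 0 such that c·Σ_{i=1}^2 (A_i⊗B_i) ρ'_ND (A_i⊗B_i)† = ρ_ND; i.e. the Bell-diagonal state ρ'_ND can be transformed back to ρ_ND by a two-term separable map. -/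
open Matrix Complex
open scoped Kronecker ComplexOrder

noncomputable section
namespace Paper

/-- The Kraus operators of the separable map converting `ρ'_ND(b)` back to `ρ_ND(b)`. -/
def KA1 (b : ℝ) : Matrix (Fin 2) (Fin 2) ℂ :=
  !![((-2 * b + Real.sqrt (1 + 4 * b ^ 2) : ℝ) : ℂ), -1 / 2; 1, 0]

def KB1 : Matrix (Fin 2) (Fin 2) ℂ := !![1, 1 / 2; 1, 0]

def KA2 (b : ℝ) : Matrix (Fin 2) (Fin 2) ℂ :=
  !![((2 * b - Real.sqrt (1 + 4 * b ^ 2) : ℝ) : ℂ), 1 / 2; 1, 0]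

def KB2 : Matrix (Fin 2) (Fin 2) ℂ := !![1, 1 / 2; -1, 0]

/-- for `0 < b ≤ 1/2` there is a `c > 0` with
`c·Σ_{i=1}^2 (A_i⊗B_i) ρ'_ND (A_i⊗B_i)† = ρ_ND`: the Bell-diagonal state `ρ'_ND`
can be transformed back to `ρ_ND` by a two-term separable map. -/
theorem stmt16 (b : ℝ) (hb0 : 0 < b) (hb : b ≤ 1 / 2) :
    ∃ c : ℝ, 0 < c ∧
      (c : ℂ) •
          ((KA1 b ⊗ₖ KB1) * rhoND' b * (KA1 b ⊗ₖ KB1)ᴴ +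
            (KA2 b ⊗ₖ KB2) * rhoND' b * (KA2 b ⊗ₖ KB2)ᴴ) = rhoND b := by
  refine ⟨1, one_pos, ?_⟩
  have h : ((Real.sqrt (1 + 4 * b ^ 2) : ℝ) : ℂ) ^ 2 = 1 + 4 * (b : ℂ) ^ 2 := by
    have h0 : Real.sqrt (1 + 4 * b ^ 2) ^ 2 = 1 + 4 * b ^ 2 :=
      Real.sq_sqrt (by positivity)
    exact_mod_cast h0
  unfold KA1 KA2
  push_cast
  have hs : star ((Real.sqrt (1 + 4 * b ^ 2) : ℝ) : ℂ) = ((Real.sqrt (1 + 4 * b ^ 2) : ℝ) : ℂ) :=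
    Complex.conj_ofReal _
  generalize ((Real.sqrt (1 + 4 * b ^ 2) : ℝ) : ℂ) = s at h hs ⊢
  have hs' : (starRingEnd ℂ) s = s := hs
  have h2 : (starRingEnd ℂ) 2 = 2 := Complex.conj_ofNat 2
  ext ⟨i, j⟩ ⟨k, l⟩
  fin_cases i <;> fin_cases j <;> fin_cases k <;> fin_cases l <;>
    simp [Matrix.mul_apply, Fintype.sum_prod_type, Fin.sum_univ_two, rhoND, rhoND', idx4,
      KB1, KB2, hs', h2] <;>
    first
    | done
    | ring1
    | linear_combination (1 / 4 : ℂ) * h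

end Paper
end
end
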